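/- arXiv:2008.07236 — 2 statements merged into one kernel-verified Lean document; each statement's English description precedes it below -/
import Mathlib

section
/- Let 0 < R < 1, 0 < c ≤ 1 and δ > 0 be constants. Let (C_n) be a sequence of doubly transitive binary linear codes, where C_n has length n (n ranging over an infinite set of positive integers), such that the rates R(C_n) converge to R and the minimal distance of C_n is at least δ·n^c for all n. Then there exist constants a with 0 < a < 1 - R and K > 0 such that for all n and all 0 ≤ i ≤ n, the weight distribution of C_n satisfies a_i ≤ K · a^{-2·ln 2·i}. -/
/-!
For a code `C` on the coordinate set `ι` and `0 ≤ p ≤ 1`, erase every coordinate independently with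
probability `p`, and let `h p` be the probability that the coordinate `j` cannot be recovered from
the unerased coordinates other than `j`. By transitivity it does not depend on `j`.

* Codewords witnessing that unerased coordinates are unrecoverable are linearly independent
  (`card_unrecoverable_le`), so `(1 - p) * h p` is at most the rate (`sum_ex_bit_le`). Hence `h` is
  bounded away from `1` at the density `l₀ = (1 - r) / 2`, where `r < 1` bounds the rate.
* The event defining `h` is monotone, and by double transitivity all coordinates other than `j`
  have the same influence on it. The logarithmic Sobolev inequality (`log_sobolev`), applied to the
  differences of the martingale that averages out one coordinate at a time, gives a Talagrand-type
  inequality (`energy_ge`), and with it total influence at least a constant times `log n` times the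
  variance (`influence_ge`). By Russo's formula the logarithmic derivative of `h` is then of order
  `log n` as long as `h` is not polynomially small, so `h l₁ ≤ n ^ (-ε)` at `l₁ = (1 - r) / 4`
  (`threshold`).
* An intersection of independent random sets of densities `p` and `p'` lies in both, so
  `h (p * p') ≤ h p * h p'` and `h (l₁ ^ (t + 1)) ≤ h l₁ ^ (t + 1) ≤ 1 / n` for a constant `t`
  (`ex_pow_param_le`).
* With `q = l₁ ^ (t + 1)`, the sum of `(q / 2) ^ |c|` over the codewords `c` is the expected number
  of codewords supported in a random set `S` of density `q / 2`. Reveal `S` one coordinate at a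
  time. Adding a coordinate to a set at most doubles the number of supported codewords, so weighting
  `S` by that number yields a measure stochastically dominated by the random set of density `q`
  (`domination`). The expected number therefore grows in each step by a factor of at most
  `1 + h q` (`partialSum_insert`), and the total is at most `(1 + 1 / n) ^ n ≤ e`.

Thus each `a_i` is at most `e * θ ^ (-i)` for `θ = q / 2` and all long codes (`exists_density`).
Since `2 * log 2 ≥ 1`, the claim follows with `a = min θ ((1 - R) / 2)`, and the finitely many short
codes are absorbed by the constant `K`.
-/

open Finset Filter

/-- The rate of a binary linear code. -/
noncomputable def codeRate {ι : Type} [Fintype ι] (C : Submodule (ZMod 2) (ι → ZMod 2)) : ℝ :=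
  (Module.finrank (ZMod 2) C : ℝ) / (Fintype.card ι : ℝ)

/-- `weightEnum C i` is the number of codewords of Hamming weight `i`. -/
noncomputable def weightEnum {ι : Type} [Fintype ι] (C : Submodule (ZMod 2) (ι → ZMod 2))
    (i : ℕ) : ℕ :=
  Nat.card {x : ι → ZMod 2 // x ∈ C ∧ hammingNorm x = i}

/-- The permutation `π` of coordinates maps the code `C` onto itself. -/
def PreservesCode {ι : Type} [Fintype ι] (C : Submodule (ZMod 2) (ι → ZMod 2))
    (π : Equiv.Perm ι) : Prop :=
  ∀ x : ι → ZMod 2, x ∈ C ↔ x ∘ π ∈ C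

/-- The automorphism group of `C` acts 2-transitively on coordinates. -/
def DoublyTransitive {ι : Type} [Fintype ι] (C : Submodule (ZMod 2) (ι → ZMod 2)) : Prop :=
  ∀ i₁ j₁ i₂ j₂ : ι, i₁ ≠ j₁ → i₂ ≠ j₂ →
    ∃ π : Equiv.Perm ι, PreservesCode C π ∧ π i₁ = i₂ ∧ π j₁ = j₂

/-- Minimal distance: the least Hamming weight of a nonzero codeword. -/
noncomputable def minDist {ι : Type} [Fintype ι] (C : Submodule (ZMod 2) (ι → ZMod 2)) : ℕ :=
  sInf {d | ∃ x ∈ C, x ≠ 0 ∧ hammingNorm x = d}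

/-- Reed-Muller code RM(m,d). -/
noncomputable def ReedMuller (m d : ℕ) : Submodule (ZMod 2) ((Fin m → ZMod 2) → ZMod 2) :=
  Submodule.map
    (LinearMap.pi fun v : Fin m → ZMod 2 => (MvPolynomial.aeval v).toLinearMap)
    (MvPolynomial.restrictTotalDegree (Fin m) (ZMod 2) d)

open scoped Classical in
/-- ML block error probability on BSC(p). -/
noncomputable def Perr {ι : Type} [Fintype ι] (C : Submodule (ZMod 2) (ι → ZMod 2)) (p : ℝ) : ℝ :=
  ∑ z : ι → ZMod 2,
    if ∃ x ∈ C, x ≠ 0 ∧ hammingNorm (z + x) ≤ hammingNorm z then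
      p ^ hammingNorm z * (1 - p) ^ (Fintype.card ι - hammingNorm z) else 0

/-- Rank of the projection of `C` to the coordinates in `S`. -/
noncomputable def rankC {ι : Type} [Fintype ι] (C : Submodule (ZMod 2) (ι → ZMod 2))
    (S : Finset ι) : ℕ :=
  Module.finrank (ZMod 2)
    (C.map (LinearMap.funLeft (ZMod 2) (ZMod 2) (Subtype.val : {i // i ∈ S} → ι)))

/-- `f_C(S) = |S| - r_C(S)`. -/
noncomputable def fC {ι : Type} [Fintype ι] (C : Submodule (ZMod 2) (ι → ZMod 2))
    (S : Finset ι) : ℝ :=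
  (S.card : ℝ) - (rankC C S : ℝ)

/-- `μ_C(λ) = E_{S ~ λ} f_C(S)`. -/
noncomputable def muC {ι : Type} [Fintype ι] (C : Submodule (ZMod 2) (ι → ZMod 2)) (l : ℝ) : ℝ :=
  ∑ S : Finset ι, l ^ S.card * (1 - l) ^ (Fintype.card ι - S.card) * fC C S

/-- Bit erasure probability `P_{b,i}(p)`. -/
noncomputable def Pbi {ι : Type} [Fintype ι] [DecidableEq ι]
    (C : Submodule (ZMod 2) (ι → ZMod 2)) (i : ι) (p : ℝ) : ℝ :=
  ∑ R ∈ ((Finset.univ : Finset ι).erase i).powerset,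
    (1 - p) ^ R.card * p ^ (Fintype.card ι - R.card) *
      (if rankC C R < rankC C (insert i R) then (1 : ℝ) else 0)

/-- The average EXIT function `h(p)`. -/
noncomputable def exitAvg {ι : Type} [Fintype ι] [DecidableEq ι]
    (C : Submodule (ZMod 2) (ι → ZMod 2)) (p : ℝ) : ℝ :=
  (1 / (Fintype.card ι : ℝ)) * ∑ i : ι, Pbi C i p / p

/-- The dual code. -/
def dualCode {ι : Type} [Fintype ι] (C : Submodule (ZMod 2) (ι → ZMod 2)) :
    Submodule (ZMod 2) (ι → ZMod 2) where
  carrier := {y | ∀ x ∈ C, ∑ i, x i * y i = 0}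
  zero_mem' := by intro x hx; simp
  add_mem' := by
    intro y z hy hz x hx
    simp only [Pi.add_apply, mul_add, Finset.sum_add_distrib, Set.mem_setOf_eq] at *
    rw [hy x hx, hz x hx, add_zero]
  smul_mem' := by
    intro c y hy x hx
    simp only [Pi.smul_apply, smul_eq_mul]
    rw [show (∑ i, x i * (c * y i)) = c * ∑ i, x i * y i by rw [Finset.mul_sum]; congr 1; funext i; ring, hy x hx, mul_zero]

namespace CubeCode

set_option linter.unusedSectionVars false

/-! ### Product measures on the cube -/

section Cube

variable {ι : Type} [Fintype ι] [DecidableEq ι]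

/-- The mass of the point `x` under the `p`-biased product measure on the cube `ι → Bool`. -/
noncomputable def wt (p : ℝ) (x : ι → Bool) : ℝ := ∏ i, if x i then p else 1 - p

/-- Expectation with respect to the `p`-biased product measure. -/
noncomputable def ex (p : ℝ) (f : (ι → Bool) → ℝ) : ℝ := ∑ x, wt p x * f x

/-- Conditional expectation that averages out the coordinate `j`. -/
noncomputable def av (p : ℝ) (j : ι) (f : (ι → Bool) → ℝ) (x : ι → Bool) : ℝ :=
  p * f (Function.update x j true) + (1 - p) * f (Function.update x j false)

/-- Discrete derivative in the direction `j`. -/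
def df (j : ι) (f : (ι → Bool) → ℝ) (x : ι → Bool) : ℝ :=
  f (Function.update x j true) - f (Function.update x j false)

/-- Successive averaging over all coordinates of a list. -/
noncomputable def avl (p : ℝ) (l : List ι) (f : (ι → Bool) → ℝ) : (ι → Bool) → ℝ :=
  l.foldl (fun g j => av p j g) f

lemma sum_flip (j : ι) (F : (ι → Bool) → ℝ) :
    ∑ x, F x = ∑ x, (F (Function.update x j true) + F (Function.update x j false)) / 2 := by
  have hinv : Function.Involutive (fun x : ι → Bool => Function.update x j (!x j)) := by
    intro x
    simp
  have h1 : ∑ x, F (Function.update x j (!x j)) = ∑ x, F x :=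
    Equiv.sum_comp (hinv.toPerm) F
  have h2 : ∀ x : ι → Bool, (F (Function.update x j true) + F (Function.update x j false)) / 2
      = (F x + F (Function.update x j (!x j))) / 2 := by
    intro x
    cases hx : x j
    · have : Function.update x j false = x := by rw [← hx]; simp
      rw [this]; simp [add_comm]
    · have : Function.update x j true = x := by rw [← hx]; simp
      rw [this]; simp
  rw [Finset.sum_congr rfl (fun x _ => h2 x), ← Finset.sum_div, Finset.sum_add_distrib, h1]
  ring

/-- The mass of `x` with the factor of the coordinate `j` left out. -/
noncomputable def wtErase (p : ℝ) (j : ι) (x : ι → Bool) : ℝ :=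
  ∏ i ∈ univ.erase j, if x i then p else 1 - p

lemma wt_update (p : ℝ) (j : ι) (x : ι → Bool) (b : Bool) :
    wt p (Function.update x j b) = (if b then p else 1 - p) * wtErase p j x := by
  unfold wt wtErase
  rw [← Finset.mul_prod_erase univ _ (Finset.mem_univ j)]
  congr 1
  · simp
  · refine Finset.prod_congr rfl fun i hi => ?_
    rw [Function.update_of_ne (Finset.ne_of_mem_erase hi)]

lemma wtErase_update (p : ℝ) (j : ι) (x : ι → Bool) (b : Bool) :
    wtErase p j (Function.update x j b) = wtErase p j x := by
  unfold wtErase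
  refine Finset.prod_congr rfl fun i hi => ?_
  rw [Function.update_of_ne (Finset.ne_of_mem_erase hi)]

lemma ex_eq_half (p : ℝ) (j : ι) (f : (ι → Bool) → ℝ) :
    ex p f = ∑ x, wtErase p j x * av p j f x / 2 := by
  unfold ex
  rw [sum_flip j]
  refine Finset.sum_congr rfl fun x _ => ?_
  rw [wt_update, wt_update]
  simp only [av, if_true, Bool.false_eq_true, if_false]
  ring

@[simp] lemma av_update (p : ℝ) (j : ι) (f : (ι → Bool) → ℝ) (x : ι → Bool) (b : Bool) :
    av p j f (Function.update x j b) = av p j f x := by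
  simp [av]

lemma ex_av (p : ℝ) (j : ι) (f : (ι → Bool) → ℝ) : ex p (av p j f) = ex p f := by
  rw [ex_eq_half p j, ex_eq_half p j f]
  refine Finset.sum_congr rfl fun x _ => ?_
  have : av p j (av p j f) x = av p j f x := by
    rw [av, av_update, av_update]; ring
  rw [this]

lemma wt_nonneg {p : ℝ} (h0 : 0 ≤ p) (h1 : p ≤ 1) (x : ι → Bool) : 0 ≤ wt p x := by
  unfold wt
  refine Finset.prod_nonneg fun i _ => ?_
  split_ifs <;> linarith

lemma ex_sub (p : ℝ) (f g : (ι → Bool) → ℝ) :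
    ex p (fun x => f x - g x) = ex p f - ex p g := by
  unfold ex
  rw [← Finset.sum_sub_distrib]
  exact Finset.sum_congr rfl fun x _ => by ring

lemma ex_mul_left (p c : ℝ) (f : (ι → Bool) → ℝ) :
    ex p (fun x => c * f x) = c * ex p f := by
  unfold ex
  rw [Finset.mul_sum]
  exact Finset.sum_congr rfl fun x _ => by ring

lemma ex_mono {p : ℝ} (h0 : 0 ≤ p) (h1 : p ≤ 1) {f g : (ι → Bool) → ℝ} (h : ∀ x, f x ≤ g x) :
    ex p f ≤ ex p g :=
  Finset.sum_le_sum fun x _ => mul_le_mul_of_nonneg_left (h x) (wt_nonneg h0 h1 x)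

lemma sum_prod_coord (φ : ι → Bool → ℝ) :
    ∑ x : ι → Bool, ∏ i, φ i (x i) = ∏ i, (φ i true + φ i false) := by
  have := (Finset.prod_univ_sum (fun _ : ι => (Finset.univ : Finset Bool)) φ).symm
  rw [Fintype.piFinset_univ] at this
  simpa only [Fintype.sum_bool] using this

lemma ex_const (p c : ℝ) : ex p (fun _ : ι → Bool => c) = c := by
  unfold ex wt
  rw [← Finset.sum_mul, sum_prod_coord (fun _ b => if b then p else 1 - p)]
  simp

lemma ex_nonneg {p : ℝ} (h0 : 0 ≤ p) (h1 : p ≤ 1) {f : (ι → Bool) → ℝ} (h : ∀ x, 0 ≤ f x) :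
    0 ≤ ex p f :=
  Finset.sum_nonneg fun x _ => mul_nonneg (wt_nonneg h0 h1 x) (h x)

lemma av_comm (p : ℝ) (i j : ι) (f : (ι → Bool) → ℝ) :
    av p i (av p j f) = av p j (av p i f) := by
  by_cases h : i = j
  · rw [h]
  · funext x
    simp only [av, Function.update_comm h]
    ring

lemma df_av_of_ne (p : ℝ) {i j : ι} (h : i ≠ j) (f : (ι → Bool) → ℝ) :
    df i (av p j f) = av p j (df i f) := by
  funext x
  simp only [av, df, Function.update_comm h]
  ring

lemma df_av_self (p : ℝ) (j : ι) (f : (ι → Bool) → ℝ) (x : ι → Bool) :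
    df j (av p j f) x = 0 := by
  simp [df]

lemma ex_avl (p : ℝ) (l : List ι) : ∀ f : (ι → Bool) → ℝ, ex p (avl p l f) = ex p f := by
  induction l with
  | nil => intro f; rfl
  | cons j l ih => intro f; exact (ih (av p j f)).trans (ex_av p j f)

lemma avl_update_of_update (p : ℝ) (j : ι) (l : List ι) : ∀ f : (ι → Bool) → ℝ,
    (∀ x b, f (Function.update x j b) = f x) →
    ∀ x b, avl p l f (Function.update x j b) = avl p l f x := by
  induction l with
  | nil => intro f h; exact h
  | cons k l ih =>
    intro f h
    refine ih (av p k f) fun x b => ?_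
    by_cases hk : k = j
    · subst hk; simp
    · simp only [av, Function.update_comm (Ne.symm hk), h]

lemma avl_update (p : ℝ) (j : ι) (l : List ι) (hj : j ∈ l) : ∀ f : (ι → Bool) → ℝ,
    ∀ x b, avl p l f (Function.update x j b) = avl p l f x := by
  induction l with
  | nil => simp at hj
  | cons k l ih =>
    intro f
    by_cases hk : j = k
    · subst hk
      exact avl_update_of_update p j l (av p j f) (fun x b => av_update p j f x b)
    · exact ih (by simpa [hk] using hj) (av p k f)

lemma eq_of_update {f : (ι → Bool) → ℝ} (h : ∀ j x b, f (Function.update x j b) = f x)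
    (x y : ι → Bool) : f y = f x := by
  have : ∀ s : Finset ι, f (s.piecewise y x) = f x := by
    intro s
    induction s using Finset.induction_on with
    | empty => simp
    | insert j s _ ih => rw [Finset.piecewise_insert, h, ih]
  simpa using this univ

/-- Averaging over all coordinates yields the expectation. -/
lemma avl_univ (p : ℝ) (f : (ι → Bool) → ℝ) (x : ι → Bool) :
    avl p univ.toList f x = ex p f := by
  have h : avl p univ.toList f = fun _ => avl p univ.toList f x := by
    funext y
    exact eq_of_update (fun j => avl_update p j _ (by simp) f) x y
  rw [← ex_avl p univ.toList f, h, ex_const]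

lemma ex_sq_sub_av (p : ℝ) (j : ι) (f : (ι → Bool) → ℝ) :
    ex p (fun x => (f x - av p j f x) ^ 2) =
      ex p (fun x => f x ^ 2) - ex p (fun x => av p j f x ^ 2) := by
  rw [← ex_av p j, ← ex_av p j (fun x => f x ^ 2), ← ex_sub]
  congr 1
  funext x
  simp only [av, Function.update_idem]
  ring

lemma abs_av_le {p : ℝ} (h0 : 0 ≤ p) (h1 : p ≤ 1) (j : ι) (f : (ι → Bool) → ℝ) (x : ι → Bool) :
    |av p j f x| ≤ av p j (fun y => |f y|) x := by
  unfold av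
  refine (abs_add_le _ _).trans ?_
  rw [abs_mul, abs_mul, abs_of_nonneg h0, abs_of_nonneg (sub_nonneg.2 h1)]

/-! ### The logarithmic Sobolev inequality -/

lemma two_point_log_sobolev {p : ℝ} (h0 : 0 < p) (h1 : p < 1) (a b : ℝ) :
    p * (a ^ 2 * Real.log (a ^ 2)) + (1 - p) * (b ^ 2 * Real.log (b ^ 2))
      - (p * a ^ 2 + (1 - p) * b ^ 2) * Real.log (p * a ^ 2 + (1 - p) * b ^ 2) ≤ (a - b) ^ 2 := by
  set m := p * a ^ 2 + (1 - p) * b ^ 2 with hm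
  have hq : 0 < 1 - p := by linarith
  have hm0 : 0 ≤ m := by positivity
  rcases hm0.eq_or_lt with hz | hmp
  · have ha' := mul_nonneg h0.le (sq_nonneg a)
    have hb' := mul_nonneg hq.le (sq_nonneg b)
    have ha : a ^ 2 = 0 := (mul_eq_zero.1 (by linarith : p * a ^ 2 = 0)).resolve_left h0.ne'
    have hb : b ^ 2 = 0 := (mul_eq_zero.1 (by linarith : (1 - p) * b ^ 2 = 0)).resolve_left hq.ne'
    rw [ha, hb, ← hz]
    simp
    positivity
  -- `log (u² / m) ≤ u² / m - 1`
  have key : ∀ u : ℝ, u ^ 2 * Real.log (u ^ 2) ≤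
      u ^ 2 * Real.log m + u ^ 2 * (u ^ 2 / m - 1) := by
    intro u
    rcases (sq_nonneg u).eq_or_lt with hu | hu
    · rw [← hu]; simp
    · have := Real.log_le_sub_one_of_pos (div_pos hu hmp)
      rw [Real.log_div hu.ne' hmp.ne'] at this
      nlinarith
  have ka := mul_le_mul_of_nonneg_left (key a) h0.le
  have kb := mul_le_mul_of_nonneg_left (key b) hq.le
  have e : p * (a ^ 2 * (a ^ 2 / m - 1)) + (1 - p) * (b ^ 2 * (b ^ 2 / m - 1)) ≤ (a - b) ^ 2 := by
    have : p * (a ^ 2 * (a ^ 2 / m - 1)) + (1 - p) * (b ^ 2 * (b ^ 2 / m - 1)) =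
        ((a - b) ^ 2 * (p * (1 - p) * (a + b) ^ 2)) / m := by
      rw [eq_div_iff hmp.ne']
      field_simp
      rw [hm]; ring
    rw [this, div_le_iff₀ hmp]
    refine mul_le_mul_of_nonneg_left ?_ (sq_nonneg _)
    rw [hm]
    nlinarith [sq_nonneg (p * a - (1 - p) * b)]
  have : m * Real.log m = p * (a ^ 2 * Real.log m) + (1 - p) * (b ^ 2 * Real.log m) := by
    rw [hm]; ring
  rw [this]
  linarith

/-- Minkowski's inequality for the `ℓ²` norm on a two-point space. -/
lemma sq_sqrt_sub_sqrt_le {p : ℝ} (h0 : 0 < p) (h1 : p < 1) (a b c d : ℝ) :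
    (√(p * a ^ 2 + (1 - p) * b ^ 2) - √(p * c ^ 2 + (1 - p) * d ^ 2)) ^ 2 ≤
      p * (a - c) ^ 2 + (1 - p) * (b - d) ^ 2 := by
  have hq : 0 < 1 - p := by linarith
  have hA : 0 ≤ p * a ^ 2 + (1 - p) * b ^ 2 := by positivity
  have hB : 0 ≤ p * c ^ 2 + (1 - p) * d ^ 2 := by positivity
  have h : p * (a * c) + (1 - p) * (b * d) ≤
      √(p * a ^ 2 + (1 - p) * b ^ 2) * √(p * c ^ 2 + (1 - p) * d ^ 2) := by
    rw [← Real.sqrt_mul hA]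
    refine Real.le_sqrt_of_sq_le ?_
    nlinarith [mul_nonneg (mul_pos h0 hq).le (sq_nonneg (a * d - b * c))]
  nlinarith [Real.sq_sqrt hA, Real.sq_sqrt hB]

/-- The entropy lost when averaging over the coordinates of a list is at most the energy. The
induction replaces `g` by the root of the average of `g ^ 2`, which by Minkowski's inequality does
not increase the energy in the remaining directions. -/
lemma log_sobolev_list {p : ℝ} (h0 : 0 < p) (h1 : p < 1) (l : List ι) : ∀ g : (ι → Bool) → ℝ,
    ex p (fun x => g x ^ 2 * Real.log (g x ^ 2)) -
      ex p (fun x => avl p l (fun y => g y ^ 2) x * Real.log (avl p l (fun y => g y ^ 2) x)) ≤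
      ∑ i, ex p (fun x => df i g x ^ 2) := by
  induction l with
  | nil =>
    intro g
    simp only [avl, List.foldl_nil, sub_self]
    exact Finset.sum_nonneg fun i _ => ex_nonneg h0.le h1.le fun x => sq_nonneg _
  | cons j l ih =>
    intro g
    have hav : ∀ x, 0 ≤ av p j (fun y => g y ^ 2) x := by
      intro x
      have hq : 0 < 1 - p := by linarith
      unfold av; positivity
    set g1 : (ι → Bool) → ℝ := fun x => √(av p j (fun y => g y ^ 2) x) with hg1
    have hsq : (fun y => g1 y ^ 2) = av p j (fun y => g y ^ 2) := by
      funext y; exact Real.sq_sqrt (hav y)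
    have hi := ih g1
    rw [hsq] at hi
    have hfst : ex p (fun x => g x ^ 2 * Real.log (g x ^ 2)) -
        ex p (fun x => g1 x ^ 2 * Real.log (g1 x ^ 2)) ≤ ex p (fun x => df j g x ^ 2) := by
      rw [← ex_av p j (fun x => g x ^ 2 * Real.log (g x ^ 2)), ← ex_sub]
      refine ex_mono h0.le h1.le fun x => ?_
      have := congrFun hsq x
      rw [this]
      exact two_point_log_sobolev h0 h1 _ _
    have hen : ∑ i, ex p (fun x => df i g1 x ^ 2) + ex p (fun x => df j g x ^ 2) ≤
        ∑ i, ex p (fun x => df i g x ^ 2) := by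
      rw [← Finset.add_sum_erase univ (fun i => ex p (fun x => df i g1 x ^ 2)) (Finset.mem_univ j),
        ← Finset.add_sum_erase univ (fun i => ex p (fun x => df i g x ^ 2)) (Finset.mem_univ j)]
      have hz : ex p (fun x => df j g1 x ^ 2) = 0 := by
        have : (fun x => df j g1 x ^ 2) = fun _ => (0 : ℝ) := by
          funext x; simp [df, hg1]
        rw [this, ex_const]
      have hle : ∑ i ∈ univ.erase j, ex p (fun x => df i g1 x ^ 2) ≤
          ∑ i ∈ univ.erase j, ex p (fun x => df i g x ^ 2) := by
        refine Finset.sum_le_sum fun i hi => ?_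
        have hij := Finset.ne_of_mem_erase hi
        rw [← ex_av p j (fun x => df i g x ^ 2)]
        refine ex_mono h0.le h1.le fun x => ?_
        simp only [df, hg1, av, Function.update_comm hij]
        exact sq_sqrt_sub_sqrt_le h0 h1 _ _ _ _
      linarith
    have h3 : ∀ x, avl p (j :: l) (fun y => g y ^ 2) x = avl p l (av p j (fun y => g y ^ 2)) x :=
      fun x => rfl
    simp only [h3]
    have h4 : ex p (fun x => g1 x ^ 2 * Real.log (g1 x ^ 2)) =
      ex p (fun x => av p j (fun y => g y ^ 2) x * Real.log (av p j (fun y => g y ^ 2) x)) := by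
      rw [← hsq]
    have h5 : ∀ x, g1 x ^ 2 = av p j (fun y => g y ^ 2) x := fun x => congrFun hsq x
    linarith

lemma log_sobolev {p : ℝ} (h0 : 0 < p) (h1 : p < 1) (g : (ι → Bool) → ℝ) :
    ex p (fun x => g x ^ 2 * Real.log (g x ^ 2)) -
      ex p (fun x => g x ^ 2) * Real.log (ex p (fun x => g x ^ 2)) ≤
      ∑ i, ex p (fun x => df i g x ^ 2) := by
  have := log_sobolev_list h0 h1 univ.toList g
  simpa only [avl_univ, ex_const] using this

/-! ### A Talagrand-type lower bound on the energy -/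

/-- A function with small `L¹` norm `≤ α` has large energy. The parameter `β` is the point at which
the convex function `v log v` is replaced by its tangent. -/
lemma energy_ge_of_ex_abs_le {p : ℝ} (h0 : 0 < p) (h1 : p < 1) {α β : ℝ} (hα : 0 < α) (hβ : 0 < β)
    (g : (ι → Bool) → ℝ) (hg : ex p (fun x => |g x|) ≤ α) :
    ex p (fun x => g x ^ 2) * (Real.log β - 2 * Real.log α) + ex p (fun x => g x ^ 2) - β ≤
      ∑ i, ex p (fun x => df i g x ^ 2) := by
  set v := ex p (fun x => g x ^ 2) with hv
  have hv0 : 0 ≤ v := ex_nonneg h0.le h1.le fun x => sq_nonneg _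
  rcases hv0.eq_or_lt with hz | hvp
  · rw [← hz]
    have : 0 ≤ ∑ i, ex p (fun x => df i g x ^ 2) :=
      Finset.sum_nonneg fun i _ => ex_nonneg h0.le h1.le fun x => sq_nonneg _
    linarith
  have hls := log_sobolev h0 h1 g
  rw [← hv] at hls
  set m := v / α with hm
  have hmp : 0 < m := by positivity
  have hpt : ∀ x, (2 * Real.log m + 2) * g x ^ 2 - 2 * m * |g x| ≤
      g x ^ 2 * Real.log (g x ^ 2) := by
    intro x
    rcases (abs_nonneg (g x)).eq_or_lt with hu | hu
    · have : g x = 0 := abs_eq_zero.1 hu.symm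
      simp [this]
    · have := Real.log_le_sub_one_of_pos (div_pos hmp hu)
      rw [Real.log_div hmp.ne' hu.ne'] at this
      rw [← sq_abs, Real.log_pow]
      have h2 : |g x| ^ 2 * (Real.log m - Real.log |g x|) ≤ |g x| ^ 2 * (m / |g x| - 1) :=
        mul_le_mul_of_nonneg_left this (sq_nonneg _)
      have h3 : |g x| ^ 2 * (m / |g x| - 1) = m * |g x| - |g x| ^ 2 := by
        field_simp
      push_cast
      nlinarith
  have hex := ex_mono (p := p) h0.le h1.le hpt
  rw [ex_sub, ex_mul_left, ex_mul_left, ← hv] at hex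
  have hmα : m * ex p (fun x => |g x|) ≤ v := by
    calc m * ex p (fun x => |g x|) ≤ m * α := mul_le_mul_of_nonneg_left hg hmp.le
      _ = v := by rw [hm]; field_simp
  have hlm : Real.log m = Real.log v - Real.log α := Real.log_div hvp.ne' hα.ne'
  have htan : v * Real.log β + v - β ≤ v * Real.log v := by
    have := Real.log_le_sub_one_of_pos (div_pos hβ hvp)
    rw [Real.log_div hβ.ne' hvp.ne'] at this
    have h2 := mul_le_mul_of_nonneg_left this hvp.le
    have h3 : v * (β / v - 1) = β - v := by field_simp
    linarith
  rw [hlm] at hex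
  nlinarith

lemma energy_ge_list {p : ℝ} (h0 : 0 < p) (h1 : p < 1) {α β : ℝ} (hα : 0 < α) (hβ : 0 < β)
    (l : List ι) : ∀ g : (ι → Bool) → ℝ, (∀ j, ex p (fun x => |g x - av p j g x|) ≤ α) →
    (ex p (fun x => g x ^ 2) - ex p (fun x => avl p l g x ^ 2)) *
      (Real.log β - 2 * Real.log α + 1) - l.length * β ≤
      ∑ i, ex p (fun x => df i g x ^ 2) := by
  induction l with
  | nil =>
    intro g _
    simp only [avl, List.foldl_nil, sub_self, List.length_nil]
    have : 0 ≤ ∑ i, ex p (fun x => df i g x ^ 2) :=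
      Finset.sum_nonneg fun i _ => ex_nonneg h0.le h1.le fun x => sq_nonneg _
    simpa using this
  | cons j l ih =>
    intro g hg
    have hg' : ∀ k, ex p (fun x => |av p j g x - av p k (av p j g) x|) ≤ α := by
      intro k
      refine le_trans ?_ (hg k)
      rw [← ex_av p j (fun x => |g x - av p k g x|)]
      refine ex_mono h0.le h1.le fun x => ?_
      refine le_trans (le_of_eq ?_) (abs_av_le h0.le h1.le j (fun y => g y - av p k g y) x)
      rw [av_comm]
      congr 1
      simp only [av]
      ring
    have hi := ih (av p j g) hg'
    have hs := energy_ge_of_ex_abs_le h0 h1 hα hβ (fun x => g x - av p j g x) (hg j)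
    -- Pythagoras in every direction `i`: the energies of `av p j g` and of the increment add up.
    have hpy : ∀ i, ex p (fun x => df i (fun y => g y - av p j g y) x ^ 2) =
        ex p (fun x => df i g x ^ 2) - ex p (fun x => df i (av p j g) x ^ 2) := by
      intro i
      have hlin : ∀ x, df i (fun y => g y - av p j g y) x = df i g x - df i (av p j g) x := by
        intro x; simp only [df]; ring
      simp only [hlin]
      by_cases hij : i = j
      · subst hij
        simp only [df_av_self, sub_zero]
        rw [show (fun x : ι → Bool => (0 : ℝ) ^ 2) = fun _ => 0 by funext; simp, ex_const, sub_zero]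
      · rw [df_av_of_ne p hij]
        exact ex_sq_sub_av p j (df i g)
    rw [Finset.sum_congr rfl fun i _ => hpy i, Finset.sum_sub_distrib, ex_sq_sub_av] at hs
    have h3 : ∀ x, avl p (j :: l) g x = avl p l (av p j g) x := fun x => rfl
    simp only [h3, List.length_cons]
    push_cast
    nlinarith

/-- The inequality of Falik and Samorodnitsky: the variance is a sum of `card ι` squared norms of
martingale differences, each of `L¹` norm at most `α`. -/
lemma energy_ge {p : ℝ} (h0 : 0 < p) (h1 : p < 1) {α β : ℝ} (hα : 0 < α) (hβ : 0 < β)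
    (g : (ι → Bool) → ℝ) (hg : ∀ j, ex p (fun x => |g x - av p j g x|) ≤ α) :
    (ex p (fun x => g x ^ 2) - ex p g ^ 2) *
      (Real.log β - 2 * Real.log α + 1) - Fintype.card ι * β ≤
      ∑ i, ex p (fun x => df i g x ^ 2) := by
  have := energy_ge_list h0 h1 hα hβ univ.toList g hg
  simpa only [avl_univ, ex_const, Finset.length_toList, Finset.card_univ] using this

/-! ### Sharp threshold for monotone events -/

lemma update_false_le (x : ι → Bool) (j : ι) :
    Function.update x j false ≤ Function.update x j true := by
  intro i
  by_cases h : i = j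
  · subst h; simp
  · simp [Function.update_of_ne h]

lemma df_nonneg {f : (ι → Bool) → ℝ} (hm : Monotone f) (j : ι) (x : ι → Bool) : 0 ≤ df j f x :=
  sub_nonneg.2 (hm (update_false_le x j))

/-- Russo's formula. -/
lemma hasDerivAt_ex (f : (ι → Bool) → ℝ) (p : ℝ) :
    HasDerivAt (fun q => ex q f) (∑ i, ex p (df i f)) p := by
  have hwt : ∀ x : ι → Bool, HasDerivAt (fun q => wt q x)
      (∑ i, wtErase p i x * (if x i then 1 else -1)) p := by
    intro x
    have := HasDerivAt.fun_finsetProd (u := (univ : Finset ι))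
      (f := fun i q => if x i then q else 1 - q) (f' := fun i => if x i then (1 : ℝ) else -1)
      (x := p) (fun i _ => by
        cases x i
        · simpa using (hasDerivAt_id p).const_sub 1
        · simpa using hasDerivAt_id' p)
    simpa only [wt, wtErase, smul_eq_mul] using this
  have hsum : HasDerivAt (fun q => ex q f)
      (∑ x, (∑ i, wtErase p i x * (if x i then 1 else -1)) * f x) p :=
    HasDerivAt.fun_sum fun x _ => (hwt x).mul_const (f x)
  convert hsum using 1
  simp only [Finset.sum_mul]
  rw [Finset.sum_comm]
  refine Finset.sum_congr rfl fun i _ => ?_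
  rw [ex_eq_half p i, sum_flip i (fun x => wtErase p i x * (if x i then 1 else -1) * f x)]
  refine Finset.sum_congr rfl fun x _ => ?_
  simp only [wtErase_update, av, df, Function.update_idem, Function.update_self, if_true,
    Bool.false_eq_true, if_false]
  ring

lemma ex_mono_param {f : (ι → Bool) → ℝ} (hm : Monotone f) {p q : ℝ} (h0 : 0 ≤ p) (hpq : p ≤ q)
    (h1 : q ≤ 1) : ex p f ≤ ex q f := by
  have hmono : MonotoneOn (fun q => ex q f) (Set.Icc 0 1) := by
    refine monotoneOn_of_deriv_nonneg (convex_Icc 0 1)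
      (fun x _ => (hasDerivAt_ex f x).continuousAt.continuousWithinAt)
      (fun x _ => (hasDerivAt_ex f x).differentiableAt.differentiableWithinAt) fun x hx => ?_
    rw [interior_Icc] at hx
    rw [(hasDerivAt_ex f x).deriv]
    exact Finset.sum_nonneg fun i _ => ex_nonneg hx.1.le hx.2.le (df_nonneg hm i)
  exact hmono ⟨h0, hpq.trans h1⟩ ⟨h0.trans hpq, h1⟩ hpq

/-- If the influences of the coordinates other than `j₀` are equal and that of `j₀` vanishes, the
total influence is at least `(log n) / 8` times the variance, unless the variance is tiny. -/
lemma influence_ge {p : ℝ} (h0 : 0 < p) (h1 : p < 1) {f : (ι → Bool) → ℝ}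
    (hf : ∀ x, f x = 0 ∨ f x = 1) (hm : Monotone f) (j₀ : ι)
    (hj₀ : ex p (df j₀ f) = 0)
    (hsym : ∀ i j, i ≠ j₀ → j ≠ j₀ → ex p (df i f) = ex p (df j f))
    (hn : 2 ≤ Fintype.card ι)
    (hV0 : 0 < ex p f * (1 - ex p f))
    (hV : -(1 / 4 * Real.log (Fintype.card ι)) ≤ Real.log (ex p f * (1 - ex p f))) :
    1 / 8 * (ex p f * (1 - ex p f)) * Real.log (Fintype.card ι) ≤ ∑ i, ex p (df i f) := by
  set n := Fintype.card ι with hndef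
  set V := ex p f * (1 - ex p f) with hVdef
  set I := ∑ i, ex p (df i f) with hI
  by_contra! hlt
  have hnR : (2 : ℝ) ≤ n := by exact_mod_cast hn
  have hL : 0 < Real.log n := Real.log_pos (by linarith)
  have hV1 : V ≤ 1 := by rw [hVdef]; nlinarith [sq_nonneg (ex p f - 1 / 2)]
  have hIn : ∀ j, ex p (df j f) ≤ I / (n - 1) := by
    have hnn : ∀ j, 0 ≤ ex p (df j f) := fun j => ex_nonneg h0.le h1.le (df_nonneg hm j)
    have hI0 : 0 ≤ I := Finset.sum_nonneg fun i _ => hnn i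
    intro j
    by_cases hj : j = j₀
    · rw [hj, hj₀]
      exact div_nonneg hI0 (by linarith)
    · rw [le_div_iff₀ (by linarith)]
      have : I = (n - 1) * ex p (df j f) := by
        rw [hI, ← Finset.add_sum_erase univ _ (Finset.mem_univ j₀), hj₀, zero_add,
          Finset.sum_congr rfl fun i hi => hsym i j (Finset.ne_of_mem_erase hi) hj,
          Finset.sum_const, Finset.card_erase_of_mem (Finset.mem_univ _), Finset.card_univ,
          nsmul_eq_mul, Nat.cast_sub (by omega), Nat.cast_one]
      rw [this, mul_comm]
  set α := Real.log n / (4 * n) with hα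
  have hαp : 0 < α := by positivity
  have hIα : I / (n - 1) ≤ α := by
    rw [hα, div_le_div_iff₀ (by linarith) (by linarith)]
    have : I ≤ 1 / 8 * Real.log n := by nlinarith
    nlinarith
  have hg : ∀ j, ex p (fun x => |f x - av p j f x|) ≤ α := by
    intro j
    refine le_trans (ex_mono h0.le h1.le fun x => ?_) ((hIn j).trans hIα)
    have hd := df_nonneg hm j x
    cases hx : x j
    · have he : Function.update x j false = x := by rw [← hx]; simp
      have : f x - av p j f x = -(p * df j f x) := by
        simp only [av, df, he]; ring
      rw [this, abs_neg, abs_of_nonneg (by positivity)]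
      nlinarith
    · have he : Function.update x j true = x := by rw [← hx]; simp
      have : f x - av p j f x = (1 - p) * df j f x := by
        simp only [av, df, he]; ring
      rw [this, abs_of_nonneg (mul_nonneg (by linarith) hd)]
      nlinarith
  have hβ : 0 < V / n := by positivity
  have hmain := energy_ge h0 h1 hαp hβ f hg
  have hsq : (fun x => f x ^ 2) = f := by
    funext x; rcases hf x with h | h <;> simp [h]
  have hdsq : ∀ i, (fun x => df i f x ^ 2) = df i f := by
    intro i; funext x
    have hd := df_nonneg hm i x
    revert hd
    unfold df
    rcases hf (Function.update x i true) with h | h <;>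
      rcases hf (Function.update x i false) with h' | h' <;> simp [h, h']
  have hvar : ex p f - ex p f ^ 2 = V := by rw [hVdef]; ring
  simp only [hsq, hdsq] at hmain
  rw [hvar, ← hI, Real.log_div hV0.ne' (by positivity), hα,
    Real.log_div hL.ne' (by positivity),
    Real.log_mul (x := 4) (y := (n : ℝ)) (by norm_num) (by positivity)] at hmain
  have hcan : (Fintype.card ι : ℝ) * (V / n) = V := by
    rw [← hndef]; field_simp
  rw [hcan] at hmain
  -- `log L ≤ L / 4 + log 4 - 1` for `L = log n`
  have hll : Real.log (Real.log n) ≤ Real.log n / 4 + Real.log 4 - 1 := by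
    have := Real.log_le_sub_one_of_pos (by positivity : 0 < Real.log n / 4)
    rw [Real.log_div hL.ne' (by norm_num)] at this
    linarith
  have hfin : V * (1 / 4 * Real.log n + 2) ≤ I := by
    refine le_trans ?_ hmain
    have : V * (1 / 4 * Real.log n + 3) ≤ V * (Real.log V - Real.log n -
        2 * (Real.log (Real.log n) - (Real.log 4 + Real.log n)) + 1) :=
      mul_le_mul_of_nonneg_left (by linarith) hV0.le
    linarith
  nlinarith [mul_pos hV0 hL]

/-- Integrating `influence_ge` over `[l₁, l₀]`: the probability at `l₁` is polynomially small. -/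
lemma threshold {l₁ l₀ ρ ε : ℝ} (hl₁ : 0 < l₁) (hl : l₁ < l₀) (hl₀ : l₀ < 1)
    (hρ1 : ρ < 1) (hε8 : ε ≤ 1 / 8)
    (hε : ε ≤ 1 / 8 * (1 - ρ) * (l₀ - l₁))
    {f : (ι → Bool) → ℝ}
    (hf : ∀ x, f x = 0 ∨ f x = 1) (hm : Monotone f) (j₀ : ι)
    (hj₀ : ∀ p, ex p (df j₀ f) = 0)
    (hsym : ∀ p i j, i ≠ j₀ → j ≠ j₀ → ex p (df i f) = ex p (df j f))
    (hn : 2 ≤ Fintype.card ι)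
    (hnρ : -Real.log (1 - ρ) ≤ 1 / 8 * Real.log (Fintype.card ι))
    (hh : ex l₀ f ≤ ρ) :
    ex l₁ f ≤ (Fintype.card ι : ℝ) ^ (-ε) := by
  set n := Fintype.card ι with hndef
  by_contra! hlt
  have hnR : (2 : ℝ) ≤ n := by exact_mod_cast hn
  have hL : 0 < Real.log n := Real.log_pos (by linarith)
  have hnp : (0 : ℝ) < n := by linarith
  have hp1 : 0 < ex l₁ f := lt_trans (Real.rpow_pos_of_pos hnp _) hlt
  have hlog1 : -ε * Real.log n < Real.log (ex l₁ f) := by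
    rw [← Real.log_rpow hnp]
    exact Real.log_lt_log (Real.rpow_pos_of_pos hnp _) hlt
  have hge : ∀ p, l₁ ≤ p → p ≤ l₀ → ex l₁ f ≤ ex p f := fun p h h' =>
    ex_mono_param hm hl₁.le h (h'.trans hl₀.le)
  have hle : ∀ p, l₁ ≤ p → p ≤ l₀ → ex p f ≤ ρ := fun p h h' =>
    (ex_mono_param hm (hl₁.le.trans h) h' hl₀.le).trans hh
  have hder : ∀ p, l₁ ≤ p → p ≤ l₀ →
      HasDerivAt (fun q => Real.log (ex q f)) ((∑ i, ex p (df i f)) / ex p f) p := fun p h h' =>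
    (hasDerivAt_ex f p).log (hp1.trans_le (hge p h h')).ne'
  obtain ⟨p, hp, hslope⟩ := exists_hasDerivAt_eq_slope (fun q => Real.log (ex q f))
    (fun p => (∑ i, ex p (df i f)) / ex p f) hl
    (fun p hp => (hder p hp.1 hp.2).continuousAt.continuousWithinAt)
    (fun p hp => hder p hp.1.le hp.2.le)
  have hep : 0 < ex p f := hp1.trans_le (hge p hp.1.le hp.2.le)
  have heρ : ex p f ≤ ρ := hle p hp.1.le hp.2.le
  have hV0 : 0 < ex p f * (1 - ex p f) := mul_pos hep (by linarith)
  have hV : -(1 / 4 * Real.log n) ≤ Real.log (ex p f * (1 - ex p f)) := by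
    rw [Real.log_mul hep.ne' (by linarith)]
    have a1 : Real.log (ex l₁ f) ≤ Real.log (ex p f) :=
      Real.log_le_log hp1 (hge p hp.1.le hp.2.le)
    have a2 : Real.log (1 - ρ) ≤ Real.log (1 - ex p f) :=
      Real.log_le_log (by linarith) (by linarith)
    nlinarith
  have hinf := influence_ge (hl₁.trans hp.1) (hp.2.trans hl₀) hf hm j₀ (hj₀ p) (hsym p) hn hV0 hV
  have hdl : 1 / 8 * (1 - ρ) * Real.log n ≤ (∑ i, ex p (df i f)) / ex p f := by
    rw [le_div_iff₀ hep]
    refine le_trans ?_ hinf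
    have : (1 - ρ) * (ex p f * Real.log n) ≤ (1 - ex p f) * (ex p f * Real.log n) :=
      mul_le_mul_of_nonneg_right (by linarith) (by positivity)
    linarith
  rw [hslope, le_div_iff₀ (by linarith)] at hdl
  have hlog0 : Real.log (ex l₀ f) ≤ 0 := by
    refine Real.log_nonpos (hp1.le.trans (hge l₀ hl.le le_rfl)) (by linarith)
  nlinarith

/-- The intersection of independent random sets of densities `p` and `q` has density `p * q`. -/
lemma ex_mul_param (p q : ℝ) (f : (ι → Bool) → ℝ) :
    ex (p * q) f = ∑ x, ∑ y, wt p x * wt q y * f (fun i => x i && y i) := by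
  have hw : ∀ z : ι → Bool, wt (p * q) z =
      ∑ x : ι → Bool, ∑ y : ι → Bool, wt p x * wt q y *
        (if (fun i => x i && y i) = z then 1 else 0) := by
    intro z
    have hind : ∀ x y : ι → Bool, (if (fun i => x i && y i) = z then (1 : ℝ) else 0) =
        ∏ i, if (x i && y i) = z i then (1 : ℝ) else 0 := by
      intro x y
      rw [Finset.prod_ite_zero]
      simp [funext_iff]
    simp only [hind, wt, ← Finset.prod_mul_distrib]
    rw [Finset.sum_congr rfl fun x _ => sum_prod_coord (fun i b =>
      (((if x i then p else 1 - p) * if b then q else 1 - q) *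
        if (x i && b) = z i then (1 : ℝ) else 0))]
    rw [sum_prod_coord (fun i a =>
      (((if a then p else 1 - p) * if true then q else 1 - q) *
        if (a && true) = z i then (1 : ℝ) else 0) +
      (((if a then p else 1 - p) * if false then q else 1 - q) *
        if (a && false) = z i then (1 : ℝ) else 0))]
    refine Finset.prod_congr rfl fun i _ => ?_
    cases z i <;> simp
    ring
  unfold ex
  simp only [hw, Finset.sum_mul]
  rw [Finset.sum_comm]
  refine Finset.sum_congr rfl fun x _ => ?_
  rw [Finset.sum_comm]
  refine Finset.sum_congr rfl fun y _ => ?_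
  simp [mul_assoc]

lemma ex_mul_param_le {p q : ℝ} (hp0 : 0 ≤ p) (hp1 : p ≤ 1) (hq0 : 0 ≤ q) (hq1 : q ≤ 1)
    {f : (ι → Bool) → ℝ} (hf : ∀ x, f x = 0 ∨ f x = 1) (hm : Monotone f) :
    ex (p * q) f ≤ ex p f * ex q f := by
  rw [ex_mul_param]
  unfold ex
  rw [Finset.sum_mul_sum]
  refine Finset.sum_le_sum fun x _ => Finset.sum_le_sum fun y _ => ?_
  have hxy : f (fun i => x i && y i) ≤ f x * f y := by
    have hx : f (fun i => x i && y i) ≤ f x := hm fun i => by cases x i <;> cases y i <;> simp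
    have hy : f (fun i => x i && y i) ≤ f y := hm fun i => by cases x i <;> cases y i <;> simp
    rcases hf x with h | h <;> rcases hf y with h' | h' <;> rw [h] at hx <;> rw [h'] at hy <;>
      rw [h, h'] <;> linarith
  calc wt p x * wt q y * f (fun i => x i && y i) ≤ wt p x * wt q y * (f x * f y) :=
        mul_le_mul_of_nonneg_left hxy (mul_nonneg (wt_nonneg hp0 hp1 x) (wt_nonneg hq0 hq1 y))
    _ = wt p x * f x * (wt q y * f y) := by ring

lemma ex_pow_param_le {p : ℝ} (hp0 : 0 ≤ p) (hp1 : p ≤ 1)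
    {f : (ι → Bool) → ℝ} (hf : ∀ x, f x = 0 ∨ f x = 1) (hm : Monotone f) (t : ℕ) :
    ex (p ^ (t + 1)) f ≤ ex p f ^ (t + 1) := by
  induction t with
  | zero => simp
  | succ t ih =>
    rw [pow_succ p, pow_succ (ex p f)]
    refine (ex_mul_param_le (by positivity) (pow_le_one₀ hp0 hp1) hp0 hp1 hf hm).trans ?_
    refine mul_le_mul_of_nonneg_right ih (ex_nonneg hp0 hp1 fun x => ?_)
    rcases hf x with h | h <;> simp [h]

/-! ### Stochastic domination -/

lemma domination_list {q : ℝ} (hq0 : 0 ≤ q) (hq1 : q ≤ 1) (w : (ι → Bool) → ℝ)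
    (hw : ∀ j x, w (Function.update x j true) * (1 - q) ≤ q * w (Function.update x j false))
    (l : List ι) : ∀ g : (ι → Bool) → ℝ, Monotone g →
      ∑ x, w x * g x ≤ ∑ x, w x * avl q l g x := by
  induction l with
  | nil => intro g _; exact le_rfl
  | cons j l ih =>
    intro g hg
    have hav : Monotone (av q j g) := by
      intro x y hxy
      have hb : ∀ b, g (Function.update x j b) ≤ g (Function.update y j b) := fun b =>
        hg (update_le_update_iff.2 ⟨le_rfl, fun i _ => hxy i⟩)
      exact add_le_add (mul_le_mul_of_nonneg_left (hb true) hq0)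
        (mul_le_mul_of_nonneg_left (hb false) (by linarith))
    refine le_trans ?_ (ih (av q j g) hav)
    rw [sum_flip j, sum_flip j (fun x => w x * av q j g x)]
    refine Finset.sum_le_sum fun x _ => ?_
    simp only [av_update]
    have := mul_le_mul_of_nonneg_right (hw j x) (df_nonneg hg j x)
    simp only [av, df] at this ⊢
    linarith

/-- A weight on the cube whose conditional probabilities of `x j = true` are all at most `q` is
stochastically dominated by the `q`-biased product measure. -/
lemma domination {q : ℝ} (hq0 : 0 ≤ q) (hq1 : q ≤ 1) (w : (ι → Bool) → ℝ)
    (hw : ∀ j x, w (Function.update x j true) * (1 - q) ≤ q * w (Function.update x j false))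
    {g : (ι → Bool) → ℝ} (hg : Monotone g) :
    ∑ x, w x * g x ≤ (∑ x, w x) * ex q g := by
  have := domination_list hq0 hq1 w hw univ.toList g hg
  simpa only [avl_univ, ← Finset.sum_mul] using this

end Cube

/-! ### Erasure decoding of a code -/

section Code

variable {ι : Type} [Fintype ι] [DecidableEq ι] (C : Submodule (ZMod 2) (ι → ZMod 2))

/-- The coordinate `j` cannot be recovered from the others when `x` marks the erased coordinates:
some codeword is nonzero at `j` and vanishes at all unerased coordinates other than `j`. -/
def Unrecoverable (j : ι) (x : ι → Bool) : Prop :=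
  ∃ c ∈ C, c j ≠ 0 ∧ ∀ i, i ≠ j → c i ≠ 0 → x i = true

open scoped Classical in
/-- The indicator function of `Unrecoverable C j`. -/
noncomputable def bit (j : ι) (x : ι → Bool) : ℝ := if Unrecoverable C j x then 1 else 0

lemma bit_zero_or_one (j : ι) (x : ι → Bool) : bit C j x = 0 ∨ bit C j x = 1 := by
  unfold bit; split_ifs <;> simp

lemma bit_nonneg (j : ι) (x : ι → Bool) : 0 ≤ bit C j x := by
  rcases bit_zero_or_one C j x with h | h <;> simp [h]

lemma bit_monotone (j : ι) : Monotone (bit C j) := by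
  intro x y hxy
  unfold bit
  split_ifs with h1 h2 h2
  · exact le_rfl
  · refine absurd ?_ h2
    obtain ⟨c, hc, hcj, h⟩ := h1
    refine ⟨c, hc, hcj, fun i hi hci => ?_⟩
    have := hxy i
    rw [h i hi hci] at this
    exact Bool.eq_true_of_true_le this
  · exact zero_le_one
  · exact le_rfl

lemma bit_update_self (j : ι) (x : ι → Bool) (b : Bool) :
    bit C j (Function.update x j b) = bit C j x := by
  have : Unrecoverable C j (Function.update x j b) ↔ Unrecoverable C j x := by
    unfold Unrecoverable
    refine exists_congr fun c => and_congr_right fun _ => and_congr_right fun _ =>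
      forall_congr' fun i => forall_congr' fun hi => ?_
    rw [Function.update_of_ne hi]
  classical
  unfold bit
  exact if_congr this rfl rfl

variable {C}

lemma bit_comp {π : Equiv.Perm ι} (hπ : PreservesCode C π) (j : ι) (x : ι → Bool) :
    bit C j (x ∘ π) = bit C (π j) x := by
  have : Unrecoverable C j (x ∘ π) ↔ Unrecoverable C (π j) x := by
    constructor
    · rintro ⟨c, hc, hcj, h⟩
      refine ⟨c ∘ π.symm, ?_, by simpa using hcj, fun i hi hci => ?_⟩
      · rw [hπ]
        convert hc using 1
        funext i; simp
      · have := h (π.symm i) (fun he => hi (by rw [← he]; simp)) hci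
        simpa using this
    · rintro ⟨c, hc, hcj, h⟩
      exact ⟨c ∘ π, (hπ c).1 hc, hcj, fun i hi hci => h (π i) (fun he => hi (π.injective he)) hci⟩
  classical
  unfold bit
  exact if_congr this rfl rfl

lemma ex_comp (p : ℝ) (π : Equiv.Perm ι) (f : (ι → Bool) → ℝ) :
    ex p (fun x => f (x ∘ π)) = ex p f := by
  unfold ex
  rw [← Equiv.sum_comp (Equiv.arrowCongr π.symm (Equiv.refl Bool)) (fun x => wt p x * f x)]
  refine Finset.sum_congr rfl fun x _ => ?_
  have h : (Equiv.arrowCongr π.symm (Equiv.refl Bool)) x = x ∘ π := by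
    funext i; simp [Equiv.arrowCongr]
  have hw : wt p (x ∘ π) = wt p x := by
    unfold wt
    exact Equiv.prod_comp π (fun i => if x i then p else 1 - p)
  rw [h, hw]

lemma ex_bit_perm {π : Equiv.Perm ι} (hπ : PreservesCode C π) (p : ℝ) (j : ι) :
    ex p (bit C (π j)) = ex p (bit C j) := by
  rw [← ex_comp p π (bit C j)]
  simp only [bit_comp hπ]

lemma ex_df_bit_perm {π : Equiv.Perm ι} (hπ : PreservesCode C π) (p : ℝ) (j k : ι) :
    ex p (df (π k) (bit C (π j))) = ex p (df k (bit C j)) := by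
  rw [← ex_comp p π (df k (bit C j))]
  congr 1
  funext x
  have : ∀ b, Function.update (x ∘ π) k b = Function.update x (π k) b ∘ π := by
    intro b
    funext i
    by_cases h : i = k
    · subst h; simp
    · simp [Function.update_of_ne h, Function.update_of_ne (fun he => h (π.injective he))]
  simp only [df, this, bit_comp hπ]

lemma ex_bit_eq (hC : DoublyTransitive C) (p : ℝ) (i j : ι) : ex p (bit C i) = ex p (bit C j) := by
  by_cases h : i = j
  · rw [h]
  obtain ⟨π, hπ, h1, -⟩ := hC j i i j (Ne.symm h) h
  rw [← h1, ex_bit_perm hπ]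

lemma ex_df_bit_eq (hC : DoublyTransitive C) (p : ℝ) (j₀ i j : ι) (hi : i ≠ j₀) (hj : j ≠ j₀) :
    ex p (df i (bit C j₀)) = ex p (df j (bit C j₀)) := by
  obtain ⟨π, hπ, h1, h2⟩ := hC j₀ j j₀ i hj.symm hi.symm
  have := ex_df_bit_perm hπ p j₀ j
  rwa [h1, h2] at this

variable (C)

open scoped Classical in
/-- The codewords witnessing that unerased coordinates are unrecoverable are linearly
independent, because on the unerased coordinates they are unit vectors. -/
lemma card_unrecoverable_le (x : ι → Bool) :
    (univ.filter fun j => x j = false ∧ Unrecoverable C j x).card ≤ Module.finrank (ZMod 2) C := by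
  set J := univ.filter fun j => x j = false ∧ Unrecoverable C j x with hJ
  have hmem : ∀ j : J, x j = false ∧ Unrecoverable C j x := fun j =>
    (Finset.mem_filter.1 j.2).2
  choose c hc hcj h using fun j : J => (hmem j).2
  have hli : LinearIndependent (ZMod 2) (fun j : J => (⟨c j, hc j⟩ : C)) := by
    rw [Fintype.linearIndependent_iff]
    intro g hg i
    have h1 : ∑ j : J, g j * c j i = 0 := by
      have := congrArg (fun v : C => (v : ι → ZMod 2) i) hg
      simpa [Finset.sum_apply] using this
    rw [Finset.sum_eq_single i] at h1
    · exact (mul_eq_zero.1 h1).resolve_right (hcj i)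
    · intro j _ hji
      have : c j i = 0 := by
        by_contra hne
        have := h j i (fun he => hji (Subtype.ext he.symm)) hne
        rw [(hmem i).1] at this
        exact Bool.false_ne_true this
      rw [this, mul_zero]
    · intro hi; exact absurd (Finset.mem_univ i) hi
  have := hli.fintype_card_le_finrank
  simpa using this

lemma sum_ex_bit_le {p : ℝ} (h0 : 0 ≤ p) (h1 : p ≤ 1) :
    (1 - p) * ∑ j, ex p (bit C j) ≤ Module.finrank (ZMod 2) C := by
  classical
  have hj : ∀ j, (1 - p) * ex p (bit C j) = ex p (fun x => if x j then 0 else bit C j x) := by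
    intro j
    rw [← ex_av p j (fun x => if x j then 0 else bit C j x), ← ex_mul_left]
    congr 1
    funext x
    simp [av, bit_update_self]
  rw [Finset.mul_sum, Finset.sum_congr rfl fun j _ => hj j]
  have hswap : ∑ j, ex p (fun x => if x j then 0 else bit C j x) =
      ex p (fun x => ∑ j, if x j then 0 else bit C j x) := by
    unfold ex
    rw [Finset.sum_comm]
    simp only [Finset.mul_sum]
  rw [hswap]
  refine (ex_mono h0 h1 (g := fun _ => (Module.finrank (ZMod 2) C : ℝ)) fun x => ?_).trans
    (ex_const p _).le
  refine le_trans (le_of_eq ?_) (Nat.cast_le.2 (card_unrecoverable_le C x))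
  rw [Finset.card_filter]
  push_cast
  refine Finset.sum_congr rfl fun j _ => ?_
  unfold bit
  cases x j <;> simp

/-! ### Counting codewords supported in a random set -/

open scoped Classical in
/-- The number of codewords whose support satisfies the predicate `T`. -/
noncomputable def cnt (T : ι → Prop) : ℕ :=
  (univ.filter fun c : ι → ZMod 2 => c ∈ C ∧ ∀ i, c i ≠ 0 → T i).card

/-- If `T'` is contained in `T` apart from the coordinate `k`, it supports at most twice as many
codewords as `T` (`b = 1`), and at most as many (`b = 0`) if none of its codewords is nonzero at
`k`. -/
lemma cnt_le (T T' : ι → Prop) (k : ι) (hT : ∀ i, i ≠ k → T' i → T i) (b : ℕ)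
    (hb : (∃ c ∈ C, c k ≠ 0 ∧ ∀ i, c i ≠ 0 → T' i) → 1 ≤ b) :
    cnt C T' ≤ cnt C T * (1 + b) := by
  classical
  unfold cnt
  set A := univ.filter fun c : ι → ZMod 2 => c ∈ C ∧ ∀ i, c i ≠ 0 → T i with hA
  set B := univ.filter fun c : ι → ZMod 2 => c ∈ C ∧ ∀ i, c i ≠ 0 → T' i with hB
  rw [← Finset.card_filter_add_card_filter_not (s := B) (fun c => c k = 0), mul_add, mul_one]
  refine add_le_add (Finset.card_le_card fun c hc => ?_) ?_
  · simp only [hA, hB, Finset.mem_filter, Finset.mem_univ, true_and] at hc ⊢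
    exact ⟨hc.1.1, fun i hi => hT i (fun he => hi (he ▸ hc.2)) (hc.1.2 i hi)⟩
  · by_cases hex : ∃ c ∈ C, c k ≠ 0 ∧ ∀ i, c i ≠ 0 → T' i
    · refine le_trans ?_ (Nat.le_mul_of_pos_right _ (hb hex))
      obtain ⟨c₀, hc₀, hk, hs⟩ := hex
      refine Finset.card_le_card_of_injOn (fun c => c + c₀) (fun c hc => ?_)
        (fun c _ c' _ h => add_right_cancel h)
      simp only [hA, hB, Finset.coe_filter, Finset.mem_filter, Finset.mem_univ, true_and,
        Set.mem_ofPred_eq] at hc ⊢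
      refine ⟨C.add_mem hc.1.1 hc₀, fun i hi => ?_⟩
      have hik : i ≠ k := by
        rintro rfl
        have h2 : ∀ a b : ZMod 2, a ≠ 0 → b ≠ 0 → a + b = 0 := by decide
        exact hi (h2 _ _ hc.2 hk)
      refine hT i hik ?_
      by_cases hci : c i = 0
      · exact hs i (fun he => hi (by simp [hci, he]))
      · exact hc.1.2 i hci
    · rw [Finset.card_eq_zero.2]
      · exact Nat.zero_le _
      · rw [Finset.filter_eq_empty_iff]
        intro c hc hck
        simp only [hB, Finset.mem_filter, Finset.mem_univ, true_and] at hc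
        exact hex ⟨c, hc.1, hck, hc.2⟩

/-- The expected number of codewords supported in the intersection of `s` with a random set of
density `q / 2`. -/
noncomputable def partialSum (q : ℝ) (s : Finset ι) : ℝ :=
  ex (q / 2) fun x => cnt C fun i => i ∈ s ∧ x i = true

/-- The random set weighted by the number of codewords it supports is dominated by a random set
of density `q`. -/
lemma partialSum_insert {q : ℝ} (hq0 : 0 ≤ q) (hq1 : q ≤ 1) (s : Finset ι) (k : ι) :
    partialSum C q (insert k s) ≤ partialSum C q s * (1 + ex q (bit C k)) := by
  have hθ0 : 0 ≤ q / 2 := by linarith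
  have hθ1 : q / 2 ≤ 1 := by linarith
  set N : (ι → Bool) → ℝ := fun x => cnt C fun i => i ∈ s ∧ x i = true with hN
  have hstep : ∀ x : ι → Bool,
      ((cnt C fun i => i ∈ insert k s ∧ x i = true : ℕ) : ℝ) ≤ N x + N x * bit C k x := by
    intro x
    rcases bit_zero_or_one C k x with hb | hb
    · have := cnt_le C (fun i => i ∈ s ∧ x i = true) (fun i => i ∈ insert k s ∧ x i = true) k
        (fun i hi h => ⟨Finset.mem_of_mem_insert_of_ne h.1 hi, h.2⟩) 0 (by
          rintro ⟨c, hc, hck, h⟩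
          have : Unrecoverable C k x := ⟨c, hc, hck, fun i _ hi => (h i hi).2⟩
          rw [bit, if_pos this] at hb
          exact absurd hb one_ne_zero)
      rw [hb, mul_zero, add_zero]
      simpa [hN] using this
    · have := cnt_le C (fun i => i ∈ s ∧ x i = true) (fun i => i ∈ insert k s ∧ x i = true) k
        (fun i hi h => ⟨Finset.mem_of_mem_insert_of_ne h.1 hi, h.2⟩) 1 (fun _ => le_rfl)
      rw [hb]
      have h2 : ((cnt C fun i => i ∈ insert k s ∧ x i = true : ℕ) : ℝ) ≤
        ((cnt C (fun i => i ∈ s ∧ x i = true) * (1 + 1) : ℕ) : ℝ) := Nat.cast_le.2 this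
      refine h2.trans (le_of_eq ?_)
      push_cast
      simp only [hN]
      ring
  have hdom := domination hq0 hq1 (fun x => wt (q / 2) x * N x) (by
    intro j x
    have h2 : N (Function.update x j true) ≤ 2 * N (Function.update x j false) := by
      have := cnt_le C (fun i => i ∈ s ∧ Function.update x j false i = true)
        (fun i => i ∈ s ∧ Function.update x j true i = true) j
        (fun i hi h => ⟨h.1, by
          have := h.2
          rw [Function.update_of_ne hi] at this ⊢
          exact this⟩) 1 (fun _ => le_rfl)
      have h3 : ((cnt C fun i => i ∈ s ∧ Function.update x j true i = true : ℕ) : ℝ) ≤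
        ((cnt C (fun i => i ∈ s ∧ Function.update x j false i = true) * (1 + 1) : ℕ) : ℝ) :=
        Nat.cast_le.2 this
      refine h3.trans (le_of_eq ?_)
      push_cast
      simp only [hN]
      ring
    have hN0 : 0 ≤ N (Function.update x j false) := Nat.cast_nonneg _
    have hE : 0 ≤ wtErase (q / 2) j x := by
      refine Finset.prod_nonneg fun i _ => ?_
      split_ifs <;> linarith
    simp only [wt_update, if_true, Bool.false_eq_true, if_false]
    have hq' : 0 ≤ 1 - q := by linarith
    calc q / 2 * wtErase (q / 2) j x * N (Function.update x j true) * (1 - q)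
        ≤ q / 2 * wtErase (q / 2) j x * (2 * N (Function.update x j false)) * (1 - q) := by
          gcongr
      _ = q * (wtErase (q / 2) j x * N (Function.update x j false)) * (1 - q) := by ring
      _ ≤ q * (wtErase (q / 2) j x * N (Function.update x j false)) * (1 - q / 2) := by
          refine mul_le_mul_of_nonneg_left (by linarith) (by positivity)
      _ = q * ((1 - q / 2) * wtErase (q / 2) j x * N (Function.update x j false)) := by ring)
    (bit_monotone C k)
  calc partialSum C q (insert k s) ≤ ex (q / 2) (fun x => N x + N x * bit C k x) :=
        ex_mono hθ0 hθ1 hstep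
    _ = partialSum C q s + ∑ x, wt (q / 2) x * N x * bit C k x := by
        unfold partialSum ex
        rw [← Finset.sum_add_distrib]
        exact Finset.sum_congr rfl fun x _ => by simp only [hN]; ring
    _ ≤ partialSum C q s + partialSum C q s * ex q (bit C k) := by
        have : partialSum C q s = ∑ x, wt (q / 2) x * N x := rfl
        rw [this]
        linarith
    _ = _ := by ring

lemma partialSum_empty (q : ℝ) : partialSum C q ∅ = 1 := by
  classical
  have : cnt C (fun _ => False) = 1 := by
    unfold cnt
    rw [Finset.card_eq_one]
    refine ⟨0, ?_⟩
    ext c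
    simp only [Finset.mem_filter, Finset.mem_univ, true_and, Finset.mem_singleton]
    constructor
    · rintro ⟨-, h⟩
      funext i
      by_contra hne
      exact h i hne
    · rintro rfl
      exact ⟨C.zero_mem, fun i hi => hi rfl⟩
  unfold partialSum
  simp only [Finset.notMem_empty, false_and, this, Nat.cast_one]
  exact ex_const _ _

lemma partialSum_le {q : ℝ} (hq0 : 0 ≤ q) (hq1 : q ≤ 1) (s : Finset ι) :
    partialSum C q s ≤ ∏ k ∈ s, (1 + ex q (bit C k)) := by
  induction s using Finset.induction_on with
  | empty => rw [partialSum_empty, Finset.prod_empty]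
  | insert k s hk ih =>
    rw [Finset.prod_insert hk, mul_comm]
    refine (partialSum_insert C hq0 hq1 s k).trans (mul_le_mul_of_nonneg_right ih ?_)
    have := ex_nonneg hq0 hq1 (bit_nonneg C k)
    linarith

lemma ex_support_subset (p : ℝ) (c : ι → ZMod 2)
    [∀ x : ι → Bool, Decidable (∀ i, c i ≠ 0 → x i = true)] :
    ex p (fun x => if ∀ i, c i ≠ 0 → x i = true then 1 else 0) = p ^ hammingNorm c := by
  unfold ex wt
  have hind : ∀ x : ι → Bool, (if ∀ i, c i ≠ 0 → x i = true then (1 : ℝ) else 0) =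
      ∏ i, if c i ≠ 0 → x i = true then (1 : ℝ) else 0 := by
    intro x
    rw [Finset.prod_ite_zero]
    simp
  simp only [hind, ← Finset.prod_mul_distrib]
  rw [sum_prod_coord (fun i b => (if b then p else 1 - p) *
    if c i ≠ 0 → b = true then (1 : ℝ) else 0)]
  have : ∀ i, ((if true then p else 1 - p) * if c i ≠ 0 → true = true then (1 : ℝ) else 0) +
      ((if false then p else 1 - p) * if c i ≠ 0 → false = true then (1 : ℝ) else 0) =
      if c i ≠ 0 then p else 1 := by
    intro i
    by_cases h : c i = 0 <;> simp [h]
  rw [Finset.prod_congr rfl fun i _ => this i, Finset.prod_ite]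
  simp [hammingNorm]

lemma weightEnum_mul_le {q : ℝ} (hq0 : 0 ≤ q) (i : ℕ) :
    weightEnum C i * (q / 2) ^ i ≤ partialSum C q univ := by
  classical
  have h1 : partialSum C q univ =
      ∑ c ∈ univ.filter (fun c : ι → ZMod 2 => c ∈ C), (q / 2) ^ hammingNorm c := by
    simp only [← ex_support_subset]
    unfold partialSum cnt ex
    rw [Finset.sum_comm]
    refine Finset.sum_congr rfl fun x _ => ?_
    rw [← Finset.mul_sum]
    congr 1
    beta_reduce
    rw [← Finset.filter_filter, Finset.card_filter]
    push_cast
    refine Finset.sum_congr rfl fun c _ => ?_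
    simp
  have h2 : weightEnum C i =
      ((univ.filter (fun c : ι → ZMod 2 => c ∈ C)).filter (fun c => hammingNorm c = i)).card := by
    unfold weightEnum
    rw [Nat.card_eq_fintype_card, Fintype.card_subtype, Finset.filter_filter]
  rw [h1, h2, ← nsmul_eq_mul, ← Finset.sum_const]
  rw [Finset.sum_congr rfl (g := fun c => (q / 2) ^ hammingNorm c)
    (fun c hc => by rw [(Finset.mem_filter.1 hc).2])]
  exact Finset.sum_le_sum_of_subset_of_nonneg (Finset.filter_subset _ _)
    fun c _ _ => by positivity

lemma weightEnum_le (i : ℕ) : weightEnum C i ≤ 2 ^ Fintype.card ι := by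
  unfold weightEnum
  refine (Nat.card_le_card_of_injective _ Subtype.val_injective).trans ?_
  simp [Nat.card_eq_fintype_card, ZMod.card]

end Code

/-! ### The uniform bound -/

/-- At a constant density `θ` depending only on the bound `r` for the rate, the terms of the
weight enumerator of a long doubly transitive code are at most `e`. -/
lemma exists_density {r : ℝ} (hr0 : 0 < r) (hr1 : r < 1) :
    ∃ θ : ℝ, 0 < θ ∧ θ < 1 ∧ ∃ N : ℕ, ∀ n, N ≤ n →
      ∀ C : Submodule (ZMod 2) (Fin n → ZMod 2), DoublyTransitive C →
        (Module.finrank (ZMod 2) C : ℝ) ≤ r * n →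
        ∀ i, (weightEnum C i : ℝ) * θ ^ i ≤ Real.exp 1 := by
  set l₀ := (1 - r) / 2 with hl₀
  set l₁ := (1 - r) / 4 with hl₁
  set ρ := r / (1 - l₀) with hρ
  have hl₁p : 0 < l₁ := by rw [hl₁]; linarith
  have hll : l₁ < l₀ := by rw [hl₁, hl₀]; linarith
  have hl₀1 : l₀ < 1 := by rw [hl₀]; linarith
  have hρ1 : ρ < 1 := by
    rw [hρ, div_lt_one (by linarith), hl₀]; linarith
  set ε := min (1 / 8) (1 / 8 * (1 - ρ) * (l₀ - l₁)) with hε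
  have hεp : 0 < ε := by
    refine lt_min (by norm_num) ?_
    have h1 : 0 < 1 - ρ := by linarith
    have h2 : 0 < l₀ - l₁ := by linarith
    positivity
  obtain ⟨t, ht⟩ := exists_nat_gt (1 / ε)
  rw [div_lt_iff₀ hεp] at ht
  set q := l₁ ^ (t + 1) with hq
  have hqp : 0 < q := by positivity
  have hq1 : q ≤ 1 := pow_le_one₀ hl₁p.le (by linarith)
  obtain ⟨N, hN⟩ := exists_nat_gt (Real.exp (-8 * Real.log (1 - ρ)))
  refine ⟨q / 2, by positivity, by linarith, max N 2, fun n hn C hC hrank i => ?_⟩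
  have hn2 : 2 ≤ n := (le_max_right _ _).trans hn
  have hnR : (2 : ℝ) ≤ n := by exact_mod_cast hn2
  have hnp : (0 : ℝ) < n := by linarith
  have hNn : (N : ℝ) ≤ n := by exact_mod_cast (le_max_left _ _).trans hn
  let j₀ : Fin n := ⟨0, by omega⟩
  have hh : ex l₀ (bit C j₀) ≤ ρ := by
    have := sum_ex_bit_le C (p := l₀) (by linarith) hl₀1.le
    rw [Finset.sum_congr rfl fun j _ => ex_bit_eq hC l₀ j j₀] at this
    simp only [Finset.sum_const, Finset.card_univ, Fintype.card_fin, nsmul_eq_mul] at this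
    rw [hρ, le_div_iff₀ (by linarith)]
    have h3 : n * (ex l₀ (bit C j₀) * (1 - l₀)) ≤ n * r := by linarith
    exact le_of_mul_le_mul_left h3 hnp
  have hthr := threshold (ρ := ρ) (ε := ε) hl₁p hll hl₀1 hρ1 (min_le_left _ _) (min_le_right _ _)
    (bit_zero_or_one C j₀) (bit_monotone C j₀) j₀
    (fun p => by
      have : df j₀ (bit C j₀) = fun _ => 0 := by
        funext x; simp [df, bit_update_self]
      rw [this, ex_const])
    (fun p i j hi hj => ex_df_bit_eq hC p j₀ i j hi hj) (by simpa using hn2)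
    (by
      rw [Fintype.card_fin]
      have : -8 * Real.log (1 - ρ) ≤ Real.log n := by
        rw [Real.le_log_iff_exp_le hnp]; linarith
      linarith) hh
  rw [Fintype.card_fin] at hthr
  have hpow : ex q (bit C j₀) ≤ 1 / n := by
    refine (ex_pow_param_le hl₁p.le (by linarith) (bit_zero_or_one C j₀)
      (bit_monotone C j₀) t).trans ?_
    refine (pow_le_pow_left₀ (ex_nonneg hl₁p.le (by linarith) (bit_nonneg C j₀)) hthr _).trans ?_
    rw [← Real.rpow_natCast, ← Real.rpow_mul hnp.le, one_div, ← Real.rpow_neg_one]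
    refine Real.rpow_le_rpow_of_exponent_le (by linarith) ?_
    push_cast
    nlinarith
  have hprod := (weightEnum_mul_le C hqp.le i).trans (partialSum_le C hqp.le hq1 univ)
  refine hprod.trans ?_
  rw [Finset.prod_congr rfl fun j _ => by rw [ex_bit_eq hC q j j₀], Finset.prod_const,
    Finset.card_univ, Fintype.card_fin]
  have h0 := ex_nonneg hqp.le hq1 (bit_nonneg C j₀)
  calc (1 + ex q (bit C j₀)) ^ n ≤ Real.exp (1 / n) ^ n := by
        refine pow_le_pow_left₀ (by linarith) ?_ n
        have := Real.add_one_le_exp (1 / n : ℝ)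
        linarith
    _ = Real.exp 1 := by
        rw [← Real.exp_nat_mul]
        congr 1
        field_simp

end CubeCode

/-- weight distribution bound for doubly transitive codes with
minimal distance at least `δ·n^c`. -/
theorem weight_bound_min_dist (R c δ : ℝ) (hR0 : 0 < R) (hR1 : R < 1)
    (hc0 : 0 < c) (hc1 : c ≤ 1) (hδ : 0 < δ)
    (n : ℕ → ℕ) (hn : StrictMono n) (hpos : ∀ k, 0 < n k)
    (C : ∀ k, Submodule (ZMod 2) (Fin (n k) → ZMod 2))
    (hdt : ∀ k, DoublyTransitive (C k))
    (hrate : Filter.Tendsto (fun k => codeRate (C k)) Filter.atTop (nhds R))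
    (hdist : ∀ k, δ * (n k : ℝ) ^ c ≤ (minDist (C k) : ℝ)) :
    ∃ a K : ℝ, 0 < a ∧ a < 1 - R ∧ 0 < K ∧ ∀ k, ∀ i ≤ n k,
      (weightEnum (C k) i : ℝ) ≤ K * a ^ (-(2 * Real.log 2 * (i : ℝ))) := by
  obtain ⟨θ, hθ0, hθ1, N, hN⟩ := CubeCode.exists_density (r := (1 + R) / 2) (by linarith)
    (by linarith)
  have hev := hrate.eventually (gt_mem_nhds (show R < (1 + R) / 2 by linarith))
  obtain ⟨k₀, hk₀⟩ := Filter.eventually_atTop.1 hev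
  set M := max k₀ N with hM
  set a := min θ ((1 - R) / 2) with ha
  have ha0 : 0 < a := lt_min hθ0 (by linarith)
  have ha1 : a < 1 := (min_le_left _ _).trans_lt hθ1
  have hlog : (1 : ℝ) ≤ 2 * Real.log 2 := by
    have := Real.log_two_gt_d9
    linarith
  have hpow : ∀ i : ℕ, a ^ (2 * Real.log 2 * (i : ℝ)) ≤ θ ^ i := by
    intro i
    calc a ^ (2 * Real.log 2 * (i : ℝ)) ≤ a ^ (i : ℝ) := by
          refine Real.rpow_le_rpow_of_exponent_ge ha0 ha1.le ?_
          nlinarith [Nat.cast_nonneg (α := ℝ) i]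
      _ = a ^ i := Real.rpow_natCast a i
      _ ≤ θ ^ i := pow_le_pow_left₀ ha0.le (min_le_left _ _) i
  refine ⟨a, Real.exp 1 + 2 ^ n M, ha0, (min_le_right _ _).trans_lt (by linarith), by positivity,
    fun k i _ => ?_⟩
  rw [Real.rpow_neg ha0.le, ← div_eq_mul_inv, le_div_iff₀ (Real.rpow_pos_of_pos ha0 _)]
  by_cases hk : M ≤ k
  · have hNk : N ≤ n k := (le_max_right _ _).trans (hk.trans hn.le_apply)
    have hr := hk₀ k ((le_max_left _ _).trans hk)
    have hnk : (0 : ℝ) < n k := by exact_mod_cast hpos k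
    unfold codeRate at hr
    rw [Fintype.card_fin, div_lt_iff₀ hnk] at hr
    have hb := hN (n k) hNk (C k) (hdt k) hr.le i
    calc (weightEnum (C k) i : ℝ) * a ^ (2 * Real.log 2 * (i : ℝ))
        ≤ weightEnum (C k) i * θ ^ i := mul_le_mul_of_nonneg_left (hpow i) (Nat.cast_nonneg _)
      _ ≤ Real.exp 1 := hb
      _ ≤ Real.exp 1 + 2 ^ n M := le_add_of_nonneg_right (by positivity)
  · -- the finitely many short codes have at most `2 ^ n M` codewords
    have h1 : (weightEnum (C k) i : ℝ) ≤ 2 ^ n M := by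
      have h2 : weightEnum (C k) i ≤ 2 ^ n M := by
        refine (CubeCode.weightEnum_le (C k) i).trans ?_
        rw [Fintype.card_fin]
        exact Nat.pow_le_pow_right (by norm_num) (hn.monotone (not_le.1 hk).le)
      exact_mod_cast h2
    have h3 : a ^ (2 * Real.log 2 * (i : ℝ)) ≤ 1 :=
      (hpow i).trans (pow_le_one₀ hθ0.le hθ1.le)
    calc (weightEnum (C k) i : ℝ) * a ^ (2 * Real.log 2 * (i : ℝ))
        ≤ weightEnum (C k) i * 1 := mul_le_mul_of_nonneg_left h3 (Nat.cast_nonneg _)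
      _ ≤ Real.exp 1 + 2 ^ n M := by linarith [Real.exp_pos 1]
end

section
/- There exist absolute constants R_0 > 0 and η > 0 with the following property. Let 0 < R ≤ R_0 and let (C_n) be a sequence of doubly transitive binary linear codes, where C_n has length n (n ranging over an infinite set of positive integers), such that the rates R(C_n) converge to R. Then there exist constants a ≥ 1 - R^η and K > 0 such that for all n and all 0 ≤ i ≤ n, the weight distribution of C_n satisfies a_i ≤ K · a^{-2·ln 2·i}. -/
/-!
The bound holds with `R₀ = 1000⁻⁴`, `η = 1/4` and `a = 1 - r`, where `r = R^{1/4}`. The argument is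
about erasures: let `t` be a random set of coordinates of density `q`, let `h(q)` be the probability
that a fixed bit of a codeword is not determined by the other bits in `t`, and let `N(t)` be the
number of codewords vanishing on `t`.

*Reduction to erasures.* For `θ = 1 - e`, the weight enumerator `∑_{x ∈ C} θ^{|x|}` is the
expectation of `N(t)` at density `e`. Adding a coordinate to `t` divides `N` by `1` or `2`, which
gives `log E_e N ≤ E_{e/2} log N` (`log_Ex_le`). The derivative of `q ↦ E_q log N` is
`-n (log 2) h(q)` by the Russo–Margulis formula, and `h` is decreasing, hence
`E_q log N ≤ n (log 2) h(q)` (`meanLog_le`). With `θ = (1 - r)^{2 log 2}`, so that `e ≥ r`, it is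
enough to know that `h(r/2) ≤ 1/n`: then `∑_{x ∈ C} θ^{|x|} ≤ 2`.

*Sharp threshold.* The same derivative, integrated from `0`, gives that `q h(q)` is at most the rate
(`mul_undet_le_rate`), hence `h ≤ 1/2` from density `4 r⁴` on, for codes of rate at most `2 r⁴`. Double
transitivity makes the influences of the other coordinates on the event that bit `i` is undetermined
equal. A log-Sobolev inequality for the biased cube (`logSobolev`), applied to martingale
differences in the manner of Falik and Samorodnitsky (`variance_le_energy`), then bounds the total
influence from below by a constant times `h (1 - h) (log n) / √q` (`sharp_threshold`). The gain
`1 / √q` at small densities is what makes the argument work: integrating from `4 r⁴` to `8 r⁴`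
yields `h(8 r⁴) ≤ n^{-r²/60}`.

*Amplification.* A union of `m = ⌈60 / r²⌉` independent random sets of density `8 r⁴` has density at
most `r/2`, and it leaves a bit undetermined only if each of them does. Therefore
`h(r/2) ≤ h(8 r⁴)^m ≤ 1/n` (`undet_amplify`, `undet_small`).
-/

open Finset Filter

/-! ### Biased expectation on the discrete cube -/

/-- The mass of a bit under the Bernoulli measure with parameter `q`. -/
noncomputable def bitMass (q : ℝ) (b : Bool) : ℝ := if b then q else 1 - q

/-- Expectation of `f` on the cube under the product of `n` Bernoulli measures with parameter `q`.
It is defined for every real `q`, as a polynomial in `q`. -/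
noncomputable def Ex (q : ℝ) {n : ℕ} (f : (Fin n → Bool) → ℝ) : ℝ :=
  ∑ x : Fin n → Bool, (∏ i, bitMass q (x i)) * f x

/-- Discrete derivative of `f` in direction `j`. -/
noncomputable def cubeD {n : ℕ} (j : Fin n) (f : (Fin n → Bool) → ℝ) (x : Fin n → Bool) : ℝ :=
  f (Function.update x j true) - f (Function.update x j false)

/-- The Dirichlet form `∑ j, E (D_j f)²`, without the customary factor `q (1 - q)`. -/
noncomputable def energy (q : ℝ) {n : ℕ} (f : (Fin n → Bool) → ℝ) : ℝ :=
  ∑ j, Ex q (fun x => (cubeD j f x) ^ 2)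

lemma bitMass_nonneg {q : ℝ} (h0 : 0 ≤ q) (h1 : q ≤ 1) (b : Bool) : 0 ≤ bitMass q b := by
  unfold bitMass; split_ifs <;> linarith

lemma mass_nonneg {q : ℝ} (h0 : 0 ≤ q) (h1 : q ≤ 1) {n : ℕ} (x : Fin n → Bool) :
    0 ≤ ∏ i, bitMass q (x i) :=
  Finset.prod_nonneg fun _ _ => bitMass_nonneg h0 h1 _

lemma Ex_succ (q : ℝ) {n : ℕ} (f : (Fin (n + 1) → Bool) → ℝ) :
    Ex q f = (1 - q) * Ex q (fun y => f (Fin.cons false y))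
      + q * Ex q (fun y => f (Fin.cons true y)) := by
  unfold Ex
  rw [← (Fin.consEquiv (fun _ : Fin (n + 1) => Bool)).sum_comp, Fintype.sum_prod_type]
  simp only [Fintype.sum_bool, Fin.consEquiv, Equiv.coe_fn_mk, Fin.prod_univ_succ, Fin.cons_zero,
    Fin.cons_succ, Finset.mul_sum]
  simp only [bitMass, if_true, Bool.false_eq_true, if_false]
  rw [add_comm]
  congr 1 <;> exact Finset.sum_congr rfl fun _ _ => by ring

lemma Ex_zero_dim (q : ℝ) (f : (Fin 0 → Bool) → ℝ) (x : Fin 0 → Bool) : Ex q f = f x := by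
  simp only [Ex, Finset.univ_unique, Finset.sum_singleton, Finset.univ_eq_empty, Finset.prod_empty,
    one_mul]
  exact congrArg f (Subsingleton.elim _ _)

lemma Ex_add (q : ℝ) {n : ℕ} (f g : (Fin n → Bool) → ℝ) :
    Ex q (fun x => f x + g x) = Ex q f + Ex q g := by
  simp [Ex, mul_add, Finset.sum_add_distrib]

lemma Ex_mul_left (q c : ℝ) {n : ℕ} (f : (Fin n → Bool) → ℝ) :
    Ex q (fun x => c * f x) = c * Ex q f := by
  simp only [Ex, Finset.mul_sum]
  exact Finset.sum_congr rfl fun _ _ => by ring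

lemma Ex_sub (q : ℝ) {n : ℕ} (f g : (Fin n → Bool) → ℝ) :
    Ex q (fun x => f x - g x) = Ex q f - Ex q g := by
  simp [Ex, mul_sub, Finset.sum_sub_distrib]

lemma Ex_neg (q : ℝ) {n : ℕ} (f : (Fin n → Bool) → ℝ) :
    Ex q (fun x => -f x) = -Ex q f := by
  simp [Ex]

lemma Ex_sum (q : ℝ) {n : ℕ} {α : Type*} (s : Finset α) (f : α → (Fin n → Bool) → ℝ) :
    Ex q (fun x => ∑ a ∈ s, f a x) = ∑ a ∈ s, Ex q (f a) := by
  simp only [Ex, Finset.mul_sum]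
  exact Finset.sum_comm

lemma Ex_const (q c : ℝ) : ∀ n : ℕ, Ex q (fun _ : Fin n → Bool => c) = c
  | 0 => Ex_zero_dim q _ default
  | n + 1 => by rw [Ex_succ, Ex_const q c n]; ring

lemma Ex_mono {q : ℝ} (h0 : 0 ≤ q) (h1 : q ≤ 1) {n : ℕ} {f g : (Fin n → Bool) → ℝ}
    (h : ∀ x, f x ≤ g x) : Ex q f ≤ Ex q g :=
  Finset.sum_le_sum fun x _ => mul_le_mul_of_nonneg_left (h x) (mass_nonneg h0 h1 x)

lemma Ex_nonneg {q : ℝ} (h0 : 0 ≤ q) (h1 : q ≤ 1) {n : ℕ} {f : (Fin n → Bool) → ℝ}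
    (h : ∀ x, 0 ≤ f x) : 0 ≤ Ex q f :=
  Finset.sum_nonneg fun x _ => mul_nonneg (mass_nonneg h0 h1 x) (h x)

lemma Ex_pos {q : ℝ} (h0 : 0 ≤ q) (h1 : q ≤ 1) : ∀ {n : ℕ} {f : (Fin n → Bool) → ℝ}
    (_ : ∀ x, 0 < f x), 0 < Ex q f
  | 0, f, h => by rw [Ex_zero_dim q f default]; exact h _
  | n + 1, f, h => by
    rw [Ex_succ]
    have a := Ex_pos h0 h1 (f := fun y => f (Fin.cons false y)) fun y => h _
    have b := Ex_pos h0 h1 (f := fun y => f (Fin.cons true y)) fun y => h _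
    rcases h0.eq_or_lt with h | h
    · subst h; simpa using a
    · nlinarith [mul_pos h b, mul_nonneg (sub_nonneg.2 h1) a.le]

lemma Ex_perm (q : ℝ) {n : ℕ} (π : Equiv.Perm (Fin n)) (f : (Fin n → Bool) → ℝ) :
    Ex q (fun x => f (x ∘ π)) = Ex q f := by
  unfold Ex
  rw [← (Equiv.arrowCongr π (Equiv.refl Bool)).sum_comp]
  refine Finset.sum_congr rfl fun x _ => ?_
  congr 1
  · rw [← Equiv.prod_comp π]; simp [Equiv.arrowCongr]
  · refine congrArg f (funext fun i => ?_); simp [Equiv.arrowCongr]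

lemma Ex_mul_sq_le {q : ℝ} (h0 : 0 ≤ q) (h1 : q ≤ 1) {n : ℕ} (f g : (Fin n → Bool) → ℝ) :
    (Ex q (fun x => f x * g x)) ^ 2 ≤ Ex q (fun x => f x ^ 2) * Ex q (fun x => g x ^ 2) := by
  unfold Ex
  refine Finset.sum_sq_le_sum_mul_sum_of_sq_le_mul _ ?_ ?_ ?_
  · exact fun x _ => mul_nonneg (mass_nonneg h0 h1 x) (sq_nonneg _)
  · exact fun x _ => mul_nonneg (mass_nonneg h0 h1 x) (sq_nonneg _)
  · intro x _; exact le_of_eq (by ring)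

/-- Expectation of a product function. -/
lemma Ex_prod (q : ℝ) {n : ℕ} (u : Fin n → Bool → ℝ) :
    Ex q (fun x => ∏ i, u i (x i)) = ∏ i, (q * u i true + (1 - q) * u i false) := by
  have : ∀ i, q * u i true + (1 - q) * u i false = ∑ b : Bool, bitMass q b * u i b := by
    intro i; simp [bitMass]
  simp only [this, Ex, ← Finset.prod_mul_distrib]
  rw [Finset.prod_univ_sum, Fintype.piFinset_univ]

/-- The Russo–Margulis formula. -/
lemma hasDerivAt_Ex : ∀ {n : ℕ} (f : (Fin n → Bool) → ℝ) (q : ℝ),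
    HasDerivAt (fun q => Ex q f) (∑ j, Ex q (cubeD j f)) q
  | 0, f, q => by
    simp only [Ex_zero_dim _ f default]
    simpa using hasDerivAt_const q (f default)
  | n + 1, f, q => by
    have a := hasDerivAt_Ex (fun y => f (Fin.cons false y)) q
    have b := hasDerivAt_Ex (fun y => f (Fin.cons true y)) q
    have c := (((hasDerivAt_const q (1:ℝ)).sub (hasDerivAt_id q)).mul a).add
      ((hasDerivAt_id q).mul b)
    have e : (fun q => Ex q f) = (fun q => (1 - q) * Ex q (fun y => f (Fin.cons false y))
      + q * Ex q (fun y => f (Fin.cons true y))) := funext fun q => Ex_succ q f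
    rw [e]
    refine c.congr_deriv ?_
    rw [Fin.sum_univ_succ]
    have h0 : Ex q (cubeD 0 f) = Ex q (fun y => f (Fin.cons true y))
        - Ex q (fun y => f (Fin.cons false y)) := by
      rw [Ex_succ]
      simp only [cubeD, Fin.update_cons_zero, Ex_sub]
      ring
    have hs : ∀ j : Fin n, Ex q (cubeD j.succ f) =
        (1 - q) * Ex q (cubeD j (fun y => f (Fin.cons false y)))
        + q * Ex q (cubeD j (fun y => f (Fin.cons true y))) := by
      intro j
      rw [Ex_succ]
      simp only [cubeD, ← Fin.cons_update]
      rfl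
    simp only [h0, hs, Finset.sum_add_distrib, ← Finset.mul_sum, id, Pi.sub_apply]
    ring

/-- The union of independent random sets of densities `p` and `q` is a random set of density
`1 - (1 - p) (1 - q)`. -/
lemma Ex_union (p q : ℝ) : ∀ {n : ℕ} (f : (Fin n → Bool) → ℝ),
    Ex (1 - (1 - p) * (1 - q)) f = Ex p (fun x => Ex q (fun y => f (fun i => x i || y i)))
  | 0, f => by
    rw [Ex_zero_dim _ f default, Ex_zero_dim _ _ default, Ex_zero_dim _ _ default]
    congr 1
  | n + 1, f => by
    have key : ∀ (b c : Bool) (x y : Fin n → Bool),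
        (fun i => (Fin.cons b x : Fin (n + 1) → Bool) i || (Fin.cons c y : Fin (n + 1) → Bool) i)
        = (Fin.cons (b || c) (fun i => x i || y i) : Fin (n + 1) → Bool) := by
      intro b c x y; ext i; refine Fin.cases ?_ (fun j => ?_) i <;> simp
    rw [Ex_succ, Ex_succ, Ex_union p q, Ex_union p q]
    simp only [Ex_succ q, key, Ex_add, Ex_mul_left, Bool.or_false, Bool.or_true]
    ring

lemma Ex_at_zero : ∀ {n : ℕ} (f : (Fin n → Bool) → ℝ), Ex 0 f = f (fun _ => false)
  | 0, f => Ex_zero_dim 0 f _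
  | n + 1, f => by
    rw [Ex_succ, Ex_at_zero]
    simp only [sub_zero, one_mul, zero_mul, add_zero]
    congr 1; ext i; refine Fin.cases ?_ (fun j => ?_) i <;> simp

lemma Ex_at_one : ∀ {n : ℕ} (f : (Fin n → Bool) → ℝ), Ex 1 f = f (fun _ => true)
  | 0, f => Ex_zero_dim 1 f _
  | n + 1, f => by
    rw [Ex_succ, Ex_at_one (fun y => f (Fin.cons true y))]
    simp only [sub_self, one_mul, zero_mul, zero_add]
    congr 1; ext i; refine Fin.cases ?_ (fun j => ?_) i <;> simp

lemma energy_succ (q : ℝ) {n : ℕ} (f : (Fin (n + 1) → Bool) → ℝ) :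
    energy q f = Ex q (fun y => (f (Fin.cons true y) - f (Fin.cons false y)) ^ 2)
      + ((1 - q) * energy q (fun y => f (Fin.cons false y))
        + q * energy q (fun y => f (Fin.cons true y))) := by
  unfold energy
  rw [Fin.sum_univ_succ]
  congr 1
  · rw [Ex_succ]
    simp only [cubeD, Fin.update_cons_zero]
    ring
  · simp only [Finset.mul_sum, ← Finset.sum_add_distrib]
    refine Finset.sum_congr rfl fun j _ => ?_
    rw [Ex_succ]
    simp only [cubeD, ← Fin.cons_update]

/-! ### A logarithmic Sobolev inequality -/

/-- `x² log x²` compared with its value at scale `r`, using `log t ≤ t - 1` at `t = x / r`. -/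
lemma sq_log_le {x r : ℝ} (hx : 0 ≤ x) (hr : 0 < r) :
    x ^ 2 * Real.log (x ^ 2) ≤ x ^ 2 * Real.log (r ^ 2) + 2 * x ^ 2 * (x / r - 1) := by
  rcases hx.eq_or_lt with h | h
  · subst h; simp
  · have h1 := Real.log_le_sub_one_of_pos (div_pos h hr)
    rw [Real.log_div h.ne' hr.ne'] at h1
    rw [Real.log_pow, Real.log_pow]
    push_cast
    nlinarith [mul_le_mul_of_nonneg_left h1 (sq_nonneg x)]

/-- Log-Sobolev inequality on the two-point space, with the constant `6 s = 6 / √q`. It is not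
sharp (the optimal constant is of order `log (1 / q)`); being `o(1 / q)` is all that matters. -/
lemma two_point_logSobolev {q s x y : ℝ} (h0 : 0 < q) (h1 : q ≤ 1 / 2) (hs : 0 < s)
    (hsq : q * s ^ 2 = 1) (hx : 0 ≤ x) (hy : 0 ≤ y) :
    (1 - q) * (x ^ 2 * Real.log (x ^ 2)) + q * (y ^ 2 * Real.log (y ^ 2))
      - ((1 - q) * x ^ 2 + q * y ^ 2) * Real.log ((1 - q) * x ^ 2 + q * y ^ 2)
      ≤ 6 * s * (q * (1 - q) * (x - y) ^ 2) := by
  have hs1 : 1 ≤ s := by nlinarith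
  set m := (1 - q) * x ^ 2 + q * y ^ 2 with hm
  have hm0 : 0 ≤ m := by
    have := mul_nonneg (by linarith : (0:ℝ) ≤ 1 - q) (sq_nonneg x)
    positivity
  rcases hm0.eq_or_lt with h | hmpos
  · have hx0 : x = 0 := by
      have := mul_nonneg h0.le (sq_nonneg y)
      have : x ^ 2 = 0 := by nlinarith [sq_nonneg x]
      simpa using this
    have hy0 : y = 0 := by
      have : y ^ 2 = 0 := by subst hx0; nlinarith [sq_nonneg y]
      simpa using this
    rw [← h, hx0, hy0]; simp
  set r := √m with hr
  have hrpos : 0 < r := Real.sqrt_pos.2 hmpos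
  have hr2 : r ^ 2 = m := Real.sq_sqrt hm0
  obtain ⟨X, hX⟩ : ∃ X, X = x / r := ⟨_, rfl⟩
  obtain ⟨Y, hY⟩ : ∃ Y, Y = y / r := ⟨_, rfl⟩
  have hX0 : 0 ≤ X := hX ▸ div_nonneg hx hrpos.le
  have hY0 : 0 ≤ Y := hY ▸ div_nonneg hy hrpos.le
  have hxX : x = X * r := by rw [hX]; field_simp
  have hyY : y = Y * r := by rw [hY]; field_simp
  have hn : (1 - q) * X ^ 2 + q * Y ^ 2 = 1 := by
    have : ((1 - q) * X ^ 2 + q * Y ^ 2) * m = 1 * m := by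
      conv_rhs => rw [hm, hxX, hyY]
      rw [← hr2]; ring
    exact mul_right_cancel₀ hmpos.ne' this
  have ex := sq_log_le hx hrpos
  have ey := sq_log_le hy hrpos
  rw [hr2, ← hX] at ex
  rw [hr2, ← hY] at ey
  have hXs : X ≤ s := by
    refine abs_le_of_sq_le_sq' ?_ hs.le |>.2
    have : q * X ^ 2 ≤ q * s ^ 2 := by nlinarith [sq_nonneg X, mul_nonneg h0.le (sq_nonneg Y)]
    exact le_of_mul_le_mul_left this h0
  have hYs : Y ≤ s := by
    refine abs_le_of_sq_le_sq' ?_ hs.le |>.2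
    have : q * Y ^ 2 ≤ q * s ^ 2 := by
      nlinarith [mul_nonneg (by linarith : (0:ℝ) ≤ 1 - q) (sq_nonneg X)]
    exact le_of_mul_le_mul_left this h0
  have hq1 : 0 ≤ 1 - q := by linarith
  -- the second-order remainder of `X³` at `X = 1`, in terms of `X²`, is `(X - 1)² (X + 1 / 2)`
  have step1 : (1 - q) * (X ^ 2 * (X - 1)) + q * (Y ^ 2 * (Y - 1))
      = (1 - q) * ((X - 1) ^ 2 * (X + 1 / 2)) + q * ((Y - 1) ^ 2 * (Y + 1 / 2)) := by
    linear_combination (1 / 2) * hn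
  have step2 : (1 - q) * ((X - 1) ^ 2 * (X + 1 / 2)) + q * ((Y - 1) ^ 2 * (Y + 1 / 2))
      ≤ (3 / 2 * s) * ((1 - q) * (X - 1) ^ 2 + q * (Y - 1) ^ 2) := by
    have a : (X - 1) ^ 2 * (X + 1 / 2) ≤ (X - 1) ^ 2 * (3 / 2 * s) :=
      mul_le_mul_of_nonneg_left (by linarith) (sq_nonneg _)
    have b : (Y - 1) ^ 2 * (Y + 1 / 2) ≤ (Y - 1) ^ 2 * (3 / 2 * s) :=
      mul_le_mul_of_nonneg_left (by linarith) (sq_nonneg _)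
    have a' := mul_le_mul_of_nonneg_left a hq1
    have b' := mul_le_mul_of_nonneg_left b h0.le
    linarith
  have step3 : (1 - q) * (X - 1) ^ 2 + q * (Y - 1) ^ 2 ≤ 2 * (q * (1 - q) * (X - Y) ^ 2) := by
    set u := (1 - q) * X + q * Y with hu
    have hu0 : 0 ≤ u := by positivity
    have hv : 1 - u ^ 2 = q * (1 - q) * (X - Y) ^ 2 := by
      rw [hu]; linear_combination (-1) * hn
    have hvn : 0 ≤ 1 - u ^ 2 := by rw [hv]; positivity
    have hu1 : u ≤ 1 := (sq_le_one_iff₀ hu0).1 (by linarith)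
    have e : (1 - q) * (X - 1) ^ 2 + q * (Y - 1) ^ 2 = 2 - 2 * u := by
      rw [hu]; linear_combination hn
    rw [e, ← hv]
    have := mul_nonneg hu0 (sub_nonneg.2 hu1)
    linarith
  have step4 : (1 - q) * (X ^ 2 * (X - 1)) + q * (Y ^ 2 * (Y - 1))
      ≤ 3 * s * (q * (1 - q) * (X - Y) ^ 2) := by
    rw [step1]
    refine step2.trans ?_
    have := mul_le_mul_of_nonneg_left step3 (by positivity : 0 ≤ 3 / 2 * s)
    linarith
  have e1 : q * (1 - q) * (x - y) ^ 2 = m * (q * (1 - q) * (X - Y) ^ 2) := by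
    rw [← hr2, hxX, hyY]; ring
  have e2 : (1 - q) * (2 * x ^ 2 * (X - 1)) + q * (2 * y ^ 2 * (Y - 1))
      = 2 * m * ((1 - q) * (X ^ 2 * (X - 1)) + q * (Y ^ 2 * (Y - 1))) := by
    rw [← hr2, hxX, hyY]; ring
  have e3 := mul_le_mul_of_nonneg_left step4 (by positivity : 0 ≤ 2 * m)
  have ex' := mul_le_mul_of_nonneg_left ex hq1
  have ey' := mul_le_mul_of_nonneg_left ey h0.le
  have e4 : m * Real.log m = (1 - q) * (x ^ 2 * Real.log m) + q * (y ^ 2 * Real.log m) := by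
    nth_rw 1 [hm]; ring
  rw [e1, e4]
  linarith

/-- Log-Sobolev inequality on the cube, by tensorization of the two-point inequality. -/
lemma logSobolev {q s : ℝ} (h0 : 0 < q) (h1 : q ≤ 1 / 2) (hs : 0 < s) (hsq : q * s ^ 2 = 1) :
    ∀ {n : ℕ} (g : (Fin n → Bool) → ℝ),
      Ex q (fun x => g x ^ 2 * Real.log (g x ^ 2))
        - Ex q (fun x => g x ^ 2) * Real.log (Ex q (fun x => g x ^ 2))
        ≤ 6 * s * (q * (1 - q) * energy q g)
  | 0, g => by
    rw [Ex_zero_dim _ _ default, Ex_zero_dim _ _ default]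
    simp [energy]
  | n + 1, g => by
    have hq1 : 0 ≤ 1 - q := by linarith
    have ih0 := logSobolev h0 h1 hs hsq (fun y => g (Fin.cons false y))
    have ih1 := logSobolev h0 h1 hs hsq (fun y => g (Fin.cons true y))
    rw [energy_succ, Ex_succ, Ex_succ q (fun x => g x ^ 2)]
    beta_reduce at ih0 ih1 ⊢
    set A0 := Ex q (fun y => g (Fin.cons false y) ^ 2) with hA0
    set A1 := Ex q (fun y => g (Fin.cons true y) ^ 2) with hA1
    have p0 : 0 ≤ A0 := Ex_nonneg h0.le (by linarith) fun _ => sq_nonneg _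
    have p1 : 0 ≤ A1 := Ex_nonneg h0.le (by linarith) fun _ => sq_nonneg _
    have tp := two_point_logSobolev h0 h1 hs hsq (Real.sqrt_nonneg A0) (Real.sqrt_nonneg A1)
    have cs := Ex_mul_sq_le h0.le (by linarith : q ≤ 1) (fun y => g (Fin.cons false y))
      (fun y => g (Fin.cons true y))
    beta_reduce at cs
    have cs' : Ex q (fun y => g (Fin.cons false y) * g (Fin.cons true y)) ≤ √A0 * √A1 := by
      rw [← Real.sqrt_mul p0]
      exact Real.le_sqrt_of_sq_le cs
    have ed : Ex q (fun y => (g (Fin.cons true y) - g (Fin.cons false y)) ^ 2)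
        = A1 + A0 - 2 * Ex q (fun y => g (Fin.cons false y) * g (Fin.cons true y)) := by
      rw [hA0, hA1, ← Ex_add, ← Ex_mul_left, ← Ex_sub]
      congr 1; ext y; ring
    have mink : (√A0 - √A1) ^ 2
        ≤ Ex q (fun y => (g (Fin.cons true y) - g (Fin.cons false y)) ^ 2) := by
      rw [ed]
      nlinarith [Real.sq_sqrt p0, Real.sq_sqrt p1]
    rw [Real.sq_sqrt p0, Real.sq_sqrt p1] at tp
    have m1 := mul_le_mul_of_nonneg_left mink (by positivity : 0 ≤ 6 * s * (q * (1 - q)))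
    have m2 := mul_le_mul_of_nonneg_left ih0 hq1
    have m3 := mul_le_mul_of_nonneg_left ih1 h0.le
    linarith

/-- Functions with small `L¹` norm compared to their `L²` norm have large entropy. -/
lemma entropy_lower {q : ℝ} (h0 : 0 ≤ q) (h1 : q ≤ 1) {n : ℕ} (g : (Fin n → Bool) → ℝ)
    {M c : ℝ} (hc : 0 < c) (hg : ∀ x, |g x| ≤ 1) (hgM : Ex q (fun x => |g x|) ≤ M) :
    Ex q (fun x => g x ^ 2) * (2 * Real.log c + 2 - Real.log M) - 2 * c * M
      ≤ Ex q (fun x => g x ^ 2 * Real.log (g x ^ 2))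
        - Ex q (fun x => g x ^ 2) * Real.log (Ex q (fun x => g x ^ 2)) := by
  have pt : ∀ x, (2 * Real.log c + 2) * g x ^ 2 - (2 * c) * |g x|
      ≤ g x ^ 2 * Real.log (g x ^ 2) := by
    intro x
    rcases eq_or_ne (g x) 0 with h | h
    · simp [h]
    · have hp := abs_pos.2 h
      have := Real.one_sub_inv_le_log_of_pos (div_pos hp hc)
      rw [Real.log_div hp.ne' hc.ne', inv_div] at this
      rw [← sq_abs, Real.log_pow]
      push_cast
      have e := mul_le_mul_of_nonneg_left this (by positivity : 0 ≤ 2 * |g x| ^ 2)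
      have e2 : 2 * |g x| ^ 2 * (1 - c / |g x|) = 2 * |g x| ^ 2 - 2 * c * |g x| := by
        field_simp
      rw [e2] at e
      linarith
  have I := Ex_mono h0 h1 pt
  rw [Ex_sub, Ex_mul_left, Ex_mul_left] at I
  set a := Ex q (fun x => g x ^ 2)
  have ha0 : 0 ≤ a := Ex_nonneg h0 h1 fun _ => sq_nonneg _
  have haM : a ≤ M := by
    refine le_trans (Ex_mono h0 h1 fun x => ?_) hgM
    rw [← sq_abs]
    nlinarith [hg x, abs_nonneg (g x)]
  have hal : a * Real.log a ≤ a * Real.log M := by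
    rcases ha0.eq_or_lt with h | h
    · rw [← h]; simp
    · exact mul_le_mul_of_nonneg_left (Real.log_le_log h haM) ha0
  have := mul_le_mul_of_nonneg_left hgM (by positivity : 0 ≤ 2 * c)
  linarith

/-! ### Influences and the variance -/

/-- Bias-variance decomposition of the Dirichlet form, a quadratic form. -/
lemma energy_split (q : ℝ) {n : ℕ} (f0 f1 : (Fin n → Bool) → ℝ) :
    (1 - q) * energy q f0 + q * energy q f1
      = energy q (fun y => (1 - q) * f0 y + q * f1 y)
        + ((1 - q) * energy q (fun y => f0 y - ((1 - q) * f0 y + q * f1 y))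
          + q * energy q (fun y => f1 y - ((1 - q) * f0 y + q * f1 y))) := by
  simp only [energy, Finset.mul_sum, ← Finset.sum_add_distrib]
  refine Finset.sum_congr rfl fun j _ => ?_
  simp only [← Ex_mul_left, ← Ex_add]
  congr 1; ext y
  simp only [cubeD]
  ring

/-- Falik–Samorodnitsky inequality: if all `L¹` influences of `f` are small, then its Dirichlet
form is large compared with its variance. The log-Sobolev inequality is applied to each of the
martingale differences of `f`; the induction peels them off one coordinate at a time. -/
lemma variance_le_energy {q s : ℝ} (h0 : 0 < q) (h1 : q ≤ 1 / 2) (hs : 0 < s)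
    (hsq : q * s ^ 2 = 1) {M c : ℝ} (hc : 0 < c) :
    ∀ {n : ℕ} (f : (Fin n → Bool) → ℝ), (∀ x, 0 ≤ f x) → (∀ x, f x ≤ 1) →
      (∀ j, 2 * q * (1 - q) * Ex q (fun x => |cubeD j f x|) ≤ M) →
      (Ex q (fun x => f x ^ 2) - Ex q f ^ 2) * (2 * Real.log c + 2 - Real.log M)
        - 2 * c * (n * M) ≤ 6 * s * (q * (1 - q) * energy q f)
  | 0, f, _, _, _ => by
    rw [Ex_zero_dim _ _ default, Ex_zero_dim _ _ default]
    simp [energy]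
  | n + 1, f, f0, f1, hf => by
    have hq1 : 0 ≤ 1 - q := by linarith
    have hqle : q ≤ 1 := by linarith
    set a := fun y : Fin n → Bool => f (Fin.cons false y) with ha
    set b := fun y : Fin n → Bool => f (Fin.cons true y) with hb
    set m := fun y : Fin n → Bool => (1 - q) * a y + q * b y with hm
    set d := fun x : Fin (n + 1) → Bool => f x - m (Fin.tail x) with hd
    have hma : ∀ y, 0 ≤ m y := fun y =>
      add_nonneg (mul_nonneg hq1 (f0 _)) (mul_nonneg h0.le (f0 _))
    have hmb : ∀ y, m y ≤ 1 := fun y => by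
      simp only [hm]
      nlinarith [mul_le_mul_of_nonneg_left (f1 (Fin.cons false y)) hq1,
        mul_le_mul_of_nonneg_left (f1 (Fin.cons true y)) h0.le]
    have hmi : ∀ j, 2 * q * (1 - q) * Ex q (fun x => |cubeD j m x|) ≤ M := by
      intro j
      refine le_trans (mul_le_mul_of_nonneg_left ?_ (by positivity)) (hf j.succ)
      rw [Ex_succ, ← Ex_mul_left, ← Ex_mul_left, ← Ex_add]
      refine Ex_mono h0.le hqle fun y => ?_
      simp only [cubeD, ← Fin.cons_update]
      have e : m (Function.update y j true) - m (Function.update y j false)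
          = (1 - q) * (a (Function.update y j true) - a (Function.update y j false))
          + q * (b (Function.update y j true) - b (Function.update y j false)) := by
        simp only [hm]; ring
      rw [e]
      refine (abs_add_le _ _).trans ?_
      rw [abs_mul, abs_mul, abs_of_nonneg hq1, abs_of_nonneg h0.le]
    have ih := variance_le_energy h0 h1 hs hsq hc m hma hmb hmi
    have dF : ∀ y, d (Fin.cons false y) = a y - m y := fun y => by simp [hd, ha]
    have dT : ∀ y, d (Fin.cons true y) = b y - m y := fun y => by simp [hd, hb]
    have hd1 : ∀ x, |d x| ≤ 1 := fun x => by
      simp only [hd]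
      rw [abs_le]
      constructor <;> linarith [f0 x, f1 x, hma (Fin.tail x), hmb (Fin.tail x)]
    have hdM : Ex q (fun x => |d x|) ≤ M := by
      refine le_of_eq_of_le ?_ (hf 0)
      rw [Ex_succ, Ex_succ]
      simp only [dF, dT, cubeD, Fin.update_cons_zero]
      have e1 : ∀ y, |a y - m y| = q * |b y - a y| := fun y => by
        rw [show a y - m y = -(q * (b y - a y)) by simp only [hm]; ring, abs_neg, abs_mul,
          abs_of_nonneg h0.le]
      have e2 : ∀ y, |b y - m y| = (1 - q) * |b y - a y| := fun y => by
        rw [show b y - m y = (1 - q) * (b y - a y) by simp only [hm]; ring, abs_mul,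
          abs_of_nonneg hq1]
      simp only [e1, e2, Ex_mul_left]
      simp only [ha, hb]
      ring
    have ent := entropy_lower h0.le hqle d hc hd1 hdM
    have ls := logSobolev h0 h1 hs hsq d
    have en : energy q f = energy q m + energy q d := by
      rw [energy_succ, energy_succ q d]
      simp only [dF, dT]
      have := energy_split q a b
      have e : Ex q (fun y => (f (Fin.cons true y) - f (Fin.cons false y)) ^ 2)
          = Ex q (fun y => (b y - m y - (a y - m y)) ^ 2) := by
        congr 1; ext y; simp only [ha, hb]; ring
      rw [e]
      linarith
    have var : Ex q (fun x => f x ^ 2) - Ex q f ^ 2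
        = (Ex q (fun x => m x ^ 2) - Ex q m ^ 2) + Ex q (fun x => d x ^ 2) := by
      have i1 : Ex q f = Ex q m := by
        rw [Ex_succ, ← Ex_mul_left, ← Ex_mul_left, ← Ex_add]
      have i2 : Ex q (fun x => f x ^ 2) = Ex q (fun x => m x ^ 2) + Ex q (fun x => d x ^ 2) := by
        rw [Ex_succ, Ex_succ q (fun x => d x ^ 2)]
        simp only [dF, dT, ← Ex_mul_left, ← Ex_add]
        congr 1; ext y
        simp only [hm, ha, hb]; ring
      rw [i1, i2]; ring
    rw [var, en]
    push_cast
    linarith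

/-- Sharp threshold: a Boolean function whose influences are of comparable size has total influence
at least of order `log n / √q` times its variance. Here `s = 1 / √q`. -/
lemma sharp_threshold {q s : ℝ} (h0 : 0 < q) (h1 : q ≤ 1 / 2) (hs : 0 < s)
    (hsq : q * s ^ 2 = 1) {n : ℕ} (hn : 1 ≤ n) (f : (Fin n → Bool) → ℝ)
    (hf : ∀ x, f x = 0 ∨ f x = 1) {I : ℝ} (hI : ∀ j, Ex q (fun x => |cubeD j f x|) ≤ I)
    (hS : n * I ≤ 2 * ∑ j, Ex q (fun x => |cubeD j f x|)) :
    s * (Ex q f * (1 - Ex q f) * Real.log n) ≤ 40 * ∑ j, Ex q (fun x => |cubeD j f x|) := by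
  have hqle : q ≤ 1 := by linarith
  have hq1 : 0 ≤ 1 - q := by linarith
  have hs1 : 1 ≤ s := by nlinarith
  have f0 : ∀ x, 0 ≤ f x := fun x => by rcases hf x with h | h <;> simp [h]
  have f1 : ∀ x, f x ≤ 1 := fun x => by rcases hf x with h | h <;> simp [h]
  have hsqf : (fun x => f x ^ 2) = f := by
    ext x; rcases hf x with h | h <;> simp [h]
  have hen : energy q f = ∑ j, Ex q (fun x => |cubeD j f x|) := by
    refine Finset.sum_congr rfl fun j _ => ?_
    congr 1; ext x
    simp only [cubeD]
    rcases hf (Function.update x j true) with h | h <;>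
      rcases hf (Function.update x j false) with h' | h' <;> simp [h, h']
  set S := ∑ j, Ex q (fun x => |cubeD j f x|) with hSdef
  set V := Ex q f * (1 - Ex q f) with hV
  have he0 : 0 ≤ Ex q f := Ex_nonneg h0.le hqle f0
  have he1 : Ex q f ≤ 1 := by
    have := Ex_mono h0.le hqle f1
    rwa [Ex_const] at this
  have hV0 : 0 ≤ V := mul_nonneg he0 (by linarith)
  have hV1 : V ≤ 1 / 4 := by nlinarith [sq_nonneg (Ex q f - 1 / 2)]
  have hnpos : (0:ℝ) < n := by exact_mod_cast hn
  have hL : 0 ≤ Real.log n := Real.log_natCast_nonneg n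
  have hI0 : 0 ≤ I := le_trans (Ex_nonneg h0.le hqle fun _ => abs_nonneg _) (hI ⟨0, hn⟩)
  have hSle : S ≤ n * I := by
    have := Finset.sum_le_sum fun j (_ : j ∈ (Finset.univ : Finset (Fin n))) => hI j
    simpa using this
  have main : ∀ M, 0 < M → 2 * q * (1 - q) * I ≤ M → V * Real.log n ≤ 10 * s * (n * M) := by
    intro M hM hMI
    have hB : 0 < n * M := mul_pos hnpos hM
    rcases le_or_gt ((n:ℝ) * M) ((n:ℝ) ^ (1 / 4 : ℝ)) with hb | hb
    · -- the free parameter of the variance inequality is taken to be `n ^ (-1/8)`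
      have hc : 0 < (n:ℝ) ^ (-(1 / 8) : ℝ) := Real.rpow_pos_of_pos hnpos _
      have hc1 : (n:ℝ) ^ (-(1 / 8) : ℝ) ≤ 1 :=
        Real.rpow_le_one_of_one_le_of_nonpos (by exact_mod_cast hn) (by norm_num)
      have fs := variance_le_energy h0 h1 hs hsq (M := M) hc f f0 f1 (fun j =>
        (mul_le_mul_of_nonneg_left (hI j) (by positivity)).trans hMI)
      rw [hsqf, hen, Real.log_rpow hnpos] at fs
      have hVe : Ex q f - Ex q f ^ 2 = V := by rw [hV]; ring
      rw [hVe] at fs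
      have hlog := Real.log_le_log hB hb
      rw [Real.log_mul hnpos.ne' hM.ne', Real.log_rpow hnpos] at hlog
      have t1 : V * (1 / 2 * Real.log n)
          ≤ V * (2 * (-(1 / 8) * Real.log n) + 2 - Real.log M) :=
        mul_le_mul_of_nonneg_left (by linarith) hV0
      have t2 : 6 * s * (q * (1 - q) * S) ≤ 3 * s * (n * M) := by
        have a : q * (1 - q) * S ≤ q * (1 - q) * (n * I) :=
          mul_le_mul_of_nonneg_left hSle (by positivity)
        have b := mul_le_mul_of_nonneg_left hMI hnpos.le
        have c : q * (1 - q) * S ≤ 1 / 2 * (n * M) := by linarith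
        have := mul_le_mul_of_nonneg_left c (by positivity : 0 ≤ 6 * s)
        linarith
      have t3 := mul_le_mul_of_nonneg_right hc1 hB.le
      have t4 := mul_le_mul_of_nonneg_right hs1 hB.le
      linarith
    · have a := Real.log_le_rpow_div hnpos.le (by norm_num : (0:ℝ) < 1 / 4)
      have t4 := mul_le_mul_of_nonneg_right hs1 hB.le
      have t5 := mul_le_mul_of_nonneg_right hV1 hL
      have a' : (n:ℝ) ^ (1 / 4 : ℝ) / (1 / 4) = 4 * (n:ℝ) ^ (1 / 4 : ℝ) := by ring
      linarith
  have lim : V * Real.log n ≤ 10 * s * (n * (2 * q * (1 - q) * I)) := by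
    refine le_of_forall_pos_le_add fun e he => ?_
    have hd : 0 < e / (10 * s * n) := by positivity
    have := main (2 * q * (1 - q) * I + e / (10 * s * n)) (by positivity) (by linarith)
    refine this.trans (le_of_eq ?_)
    field_simp
  have t1 : 10 * s * (n * (2 * q * (1 - q) * I)) ≤ 40 * s * q * S := by
    have a : (1 - q) * (n * I) ≤ 2 * S := by
      nlinarith [mul_nonneg h0.le (mul_nonneg hnpos.le hI0)]
    have := mul_le_mul_of_nonneg_left a (by positivity : 0 ≤ 20 * s * q)
    linarith
  calc s * (V * Real.log n) ≤ s * (40 * s * q * S) :=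
        mul_le_mul_of_nonneg_left (lim.trans t1) hs.le
    _ = 40 * (q * s ^ 2) * S := by ring
    _ = 40 * S := by rw [hsq]; ring

lemma antitoneOn_Ex {n : ℕ} {f : (Fin n → Bool) → ℝ} (hf : ∀ j x, cubeD j f x ≤ 0) :
    AntitoneOn (fun q => Ex q f) (Set.Icc 0 1) := by
  refine antitoneOn_of_deriv_nonpos (convex_Icc 0 1)
    (fun q _ => (hasDerivAt_Ex f q).continuousAt.continuousWithinAt)
    (fun q _ => (hasDerivAt_Ex f q).differentiableAt.differentiableWithinAt) ?_
  intro q hq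
  rw [interior_Icc] at hq
  rw [(hasDerivAt_Ex f q).deriv]
  refine Finset.sum_nonpos fun j _ => ?_
  have := Ex_mono hq.1.le hq.2.le (hf j)
  rwa [Ex_const] at this

/-! ### From expected logarithms to the logarithm of an expectation -/

/-- If switching on a coordinate divides `N` by a factor between `1` and `2`, then the logarithm of
the mean of `N` is at most the mean of its logarithm at half the density. -/
lemma log_Ex_le {e : ℝ} (h0 : 0 ≤ e) (h1 : e ≤ 1) : ∀ {n : ℕ} (N : (Fin n → Bool) → ℝ),
    (∀ t, 0 < N t) →
    (∀ j t, N (Function.update t j true) ≤ N (Function.update t j false)) →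
    (∀ j t, N (Function.update t j false) ≤ 2 * N (Function.update t j true)) →
    Real.log (Ex e N) ≤ Ex (e / 2) (fun t => Real.log (N t))
  | 0, N, _, _, _ => by
    rw [Ex_zero_dim _ N default, Ex_zero_dim _ _ default]
  | n + 1, N, hN, hm, h2 => by
    have ihF := log_Ex_le h0 h1 (fun y => N (Fin.cons false y)) (fun _ => hN _)
      (fun j y => by simpa only [Fin.cons_update] using hm j.succ (Fin.cons false y))
      (fun j y => by simpa only [Fin.cons_update] using h2 j.succ (Fin.cons false y))
    have ihT := log_Ex_le h0 h1 (fun y => N (Fin.cons true y)) (fun _ => hN _)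
      (fun j y => by simpa only [Fin.cons_update] using hm j.succ (Fin.cons true y))
      (fun j y => by simpa only [Fin.cons_update] using h2 j.succ (Fin.cons true y))
    rw [Ex_succ, Ex_succ]
    set A := Ex e (fun y => N (Fin.cons false y)) with hA
    set B := Ex e (fun y => N (Fin.cons true y)) with hB
    have hA0 : 0 < A := Ex_pos h0 h1 fun _ => hN _
    have hB0 : 0 < B := Ex_pos h0 h1 fun _ => hN _
    have hBA : B ≤ A := Ex_mono h0 h1 fun y => by
      have := hm 0 (Fin.cons true y)
      rwa [Fin.update_cons_zero, Fin.update_cons_zero] at this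
    have hAB : A ≤ 2 * B := by
      rw [hB, ← Ex_mul_left]
      refine Ex_mono h0 h1 fun y => ?_
      have := h2 0 (Fin.cons true y)
      rwa [Fin.update_cons_zero, Fin.update_cons_zero] at this
    -- with `u = A / B` in `[1, 2]`, this rests on `log u ≤ u - 1 ≤ 2 (u - 1) / u`
    have key : Real.log ((1 - e) * A + e * B)
        ≤ (1 - e / 2) * Real.log A + e / 2 * Real.log B := by
      have hpos : 0 < (1 - e) * A + e * B := by nlinarith
      have l1 := Real.log_le_sub_one_of_pos (div_pos hpos hA0)
      rw [Real.log_div hpos.ne' hA0.ne'] at l1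
      have l2 := Real.log_le_sub_one_of_pos (div_pos hA0 hB0)
      rw [Real.log_div hA0.ne' hB0.ne'] at l2
      have e1 : ((1 - e) * A + e * B) / A - 1 = - (e * ((A - B) / A)) := by
        field_simp; ring
      have e2 : A / B - 1 ≤ 2 * ((A - B) / A) := by
        rw [div_sub_one hB0.ne', mul_div_assoc', div_le_div_iff₀ hB0 hA0]
        nlinarith
      rw [e1] at l1
      have := mul_le_mul_of_nonneg_left (l2.trans e2) (by positivity : 0 ≤ e / 2)
      linarith
    refine key.trans ?_
    have a := mul_le_mul_of_nonneg_left ihF (by linarith : 0 ≤ 1 - e / 2)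
    have b := mul_le_mul_of_nonneg_left ihT (by positivity : 0 ≤ e / 2)
    linarith

/-! ### Codes on random subsets of the coordinates -/

section Codes

variable {n : ℕ} (C : Submodule (ZMod 2) (Fin n → ZMod 2))

/-- Given the coordinates in `t`, the `i`-th bit of a codeword is not determined by the other known
bits: some codeword vanishes on `t` away from `i` and is `1` at `i`. -/
def Undetermined (i : Fin n) (t : Fin n → Bool) : Prop :=
  ∃ x ∈ C, x i = 1 ∧ ∀ l, l ≠ i → t l = true → x l = 0

open scoped Classical in
/-- Indicator of `Undetermined`. -/
noncomputable def undet (i : Fin n) (t : Fin n → Bool) : ℝ := if Undetermined C i t then 1 else 0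

open scoped Classical in
/-- The codewords vanishing on `t`. -/
noncomputable def vanishing (t : Fin n → Bool) : Finset (Fin n → ZMod 2) :=
  Finset.univ.filter fun x => x ∈ C ∧ ∀ l, t l = true → x l = 0

lemma mem_vanishing {t : Fin n → Bool} {x : Fin n → ZMod 2} :
    x ∈ vanishing C t ↔ x ∈ C ∧ ∀ l, t l = true → x l = 0 := by
  simp [vanishing]

lemma undet_eq (i : Fin n) (t : Fin n → Bool) : undet C i t = 0 ∨ undet C i t = 1 := by
  unfold undet; split_ifs <;> simp

lemma undet_nonneg (i : Fin n) (t : Fin n → Bool) : 0 ≤ undet C i t := by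
  rcases undet_eq C i t with h | h <;> simp [h]

lemma undet_anti (i : Fin n) {t t' : Fin n → Bool} (h : ∀ l, t l = true → t' l = true) :
    undet C i t' ≤ undet C i t := by
  by_cases h' : Undetermined C i t'
  · obtain ⟨x, hx, hi, hl⟩ := h'
    have : Undetermined C i t := ⟨x, hx, hi, fun l hli ht => hl l hli (h l ht)⟩
    rw [undet, undet, if_pos this]
    split_ifs <;> norm_num
  · rw [undet, if_neg h']
    exact undet_nonneg C i t

lemma cubeD_undet_nonpos (i j : Fin n) (t : Fin n → Bool) : cubeD j (undet C i) t ≤ 0 := by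
  refine sub_nonpos.2 (undet_anti C i fun l hl => ?_)
  rcases eq_or_ne l j with rfl | h
  · simp
  · simpa [Function.update_of_ne h] using hl

lemma undet_or (i : Fin n) (t t' : Fin n → Bool) :
    undet C i (fun l => t l || t' l) ≤ undet C i t * undet C i t' := by
  have a := undet_anti C i (t := t) (t' := fun l => t l || t' l) (fun l h => by simp [h])
  have b := undet_anti C i (t := t') (t' := fun l => t l || t' l) (fun l h => by simp [h])
  rcases undet_eq C i t with h | h <;> rcases undet_eq C i t' with h' | h' <;>
    simp only [h, h'] at a b ⊢ <;> linarith

lemma undet_comp {π : Equiv.Perm (Fin n)} (hπ : PreservesCode C π) (i : Fin n) (t : Fin n → Bool) :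
    undet C i (t ∘ π) = undet C (π i) t := by
  have : Undetermined C i (t ∘ π) ↔ Undetermined C (π i) t := by
    constructor
    · rintro ⟨x, hx, hi, hl⟩
      refine ⟨x ∘ π.symm, (hπ _).2 ?_, by simpa using hi, fun l hli ht => ?_⟩
      · convert hx; ext k; simp
      · refine hl (π.symm l) (fun h => hli (by rw [← h]; simp)) (by simpa using ht)
    · rintro ⟨x, hx, hi, hl⟩
      exact ⟨x ∘ π, (hπ x).1 hx, hi, fun l hli ht => hl (π l) (fun h => hli (π.injective h)) ht⟩
  classical
  simp [undet, this]

lemma Ex_undet_eq (hC : DoublyTransitive C) (q : ℝ) (i j : Fin n) :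
    Ex q (undet C i) = Ex q (undet C j) := by
  rcases eq_or_ne i j with rfl | h
  · rfl
  obtain ⟨π, hπ, h1, -⟩ := hC i j j i h h.symm
  rw [← Ex_perm q π (undet C i)]
  simp only [undet_comp C hπ, h1]

/-- The stabilizer of `i` acts transitively on the other coordinates, so that these have the same
influence on the event that `i` is undetermined. -/
lemma influence_eq (hC : DoublyTransitive C) (q : ℝ) {i j l : Fin n} (hj : j ≠ i) (hl : l ≠ i) :
    Ex q (fun t => |cubeD j (undet C i) t|) = Ex q (fun t => |cubeD l (undet C i) t|) := by
  obtain ⟨π, hπ, h1, h2⟩ := hC i j i l hj.symm hl.symm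
  rw [← Ex_perm q π (fun t => |cubeD j (undet C i) t|)]
  congr 1; ext t
  have e : ∀ b, undet C i (Function.update (t ∘ π) j b) = undet C i (Function.update t l b) := by
    intro b
    have : Function.update (t ∘ π) j b = Function.update t l b ∘ π := by
      rw [← h2]; exact (Function.update_comp_eq_of_injective t π.injective j b).symm
    rw [this, undet_comp C hπ, h1]
  simp only [cubeD, e]

lemma influence_self (q : ℝ) (i : Fin n) : Ex q (fun t => |cubeD i (undet C i) t|) = 0 := by
  have : ∀ t, cubeD i (undet C i) t = 0 := by
    intro t
    refine sub_eq_zero.2 ?_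
    have : Undetermined C i (Function.update t i true)
        ↔ Undetermined C i (Function.update t i false) := by
      refine exists_congr fun x => and_congr_right fun _ => and_congr_right fun _ => ?_
      refine forall_congr' fun l => forall_congr' fun hl => ?_
      simp [Function.update_of_ne hl]
    classical
    simp [undet, this]
  simp [this, Ex_const]

/-- Revealing one more coordinate `j` halves the number of compatible codewords if `j` was
undetermined, and does not change it otherwise. -/
lemma card_vanishing_update (j : Fin n) (t : Fin n → Bool) :
    ((vanishing C (Function.update t j false)).card : ℝ)
      = (1 + undet C j t) * (vanishing C (Function.update t j true)).card := by
  classical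
  set A := vanishing C (Function.update t j false) with hA
  have mA : ∀ x, x ∈ A ↔ x ∈ C ∧ ∀ l, l ≠ j → t l = true → x l = 0 := by
    intro x
    rw [hA, mem_vanishing]
    refine and_congr_right fun _ => forall_congr' fun l => ?_
    rcases eq_or_ne l j with rfl | h
    · simp
    · simp [h]
  have h0 : A.filter (fun x => x j = 0) = vanishing C (Function.update t j true) := by
    ext x
    rw [Finset.mem_filter, mA, mem_vanishing]
    constructor
    · rintro ⟨⟨hx, hl⟩, hj⟩
      refine ⟨hx, fun l ht => ?_⟩
      rcases eq_or_ne l j with rfl | h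
      · exact hj
      · exact hl l h (by simpa [Function.update_of_ne h] using ht)
    · rintro ⟨hx, hl⟩
      exact ⟨⟨hx, fun l h ht => hl l (by simpa [Function.update_of_ne h] using ht)⟩,
        hl j (by simp)⟩
  have z2 : ∀ a : ZMod 2, a = 0 ∨ a = 1 := by decide
  have z11 : (1:ZMod 2) + 1 = 0 := by decide
  rw [← Finset.card_filter_add_card_filter_not (s := A) (fun x => x j = 0), h0]
  by_cases hu : Undetermined C j t
  · obtain ⟨v, hv, hvj, hvl⟩ := hu
    have hu : Undetermined C j t := ⟨v, hv, hvj, hvl⟩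
    have hcard : (A.filter (fun x => ¬ x j = 0)).card = (A.filter (fun x => x j = 0)).card := by
      refine Finset.card_bij' (fun x _ => x + v) (fun x _ => x + v) ?_ ?_ ?_ ?_
      · intro x hx
        rw [Finset.mem_filter, mA] at hx ⊢
        refine ⟨⟨C.add_mem hx.1.1 hv, fun l h ht => ?_⟩, ?_⟩
        · simp [hx.1.2 l h ht, hvl l h ht]
        · have := (z2 (x j)).resolve_left hx.2
          simp [this, hvj, z11]
      · intro x hx
        rw [Finset.mem_filter, mA] at hx ⊢
        refine ⟨⟨C.add_mem hx.1.1 hv, fun l h ht => ?_⟩, ?_⟩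
        · simp [hx.1.2 l h ht, hvl l h ht]
        · simp [hx.2, hvj]
      all_goals
        intro x _
        rw [add_assoc]
        ext l
        rcases z2 (v l) with h | h <;> simp [h, z11]
    rw [hcard, h0, undet, if_pos hu]
    push_cast; ring
  · have : A.filter (fun x => ¬ x j = 0) = ∅ := by
      refine Finset.filter_eq_empty_iff.2 fun x hx h => hu ?_
      obtain ⟨hx, hl⟩ := (mA x).1 hx
      exact ⟨x, hx, (z2 (x j)).resolve_left h, hl⟩
    rw [this, undet, if_neg hu]
    simp

lemma card_vanishing_pos (t : Fin n → Bool) : (0:ℝ) < (vanishing C t).card := by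
  have : (0 : Fin n → ZMod 2) ∈ vanishing C t :=
    (mem_vanishing C).2 ⟨C.zero_mem, fun _ _ => rfl⟩
  exact_mod_cast Finset.card_pos.2 ⟨_, this⟩

lemma cubeD_log_card (j : Fin n) (t : Fin n → Bool) :
    cubeD j (fun t => Real.log (vanishing C t).card) t = -(Real.log 2 * undet C j t) := by
  simp only [cubeD, card_vanishing_update]
  have := card_vanishing_pos C (Function.update t j true)
  rcases undet_eq C j t with h | h
  · simp [h]
  · rw [h, Real.log_mul (by norm_num) this.ne']
    norm_num

/-- The expected log-number of codewords vanishing on a random set of density `q`. -/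
noncomputable def meanLog (q : ℝ) : ℝ := Ex q (fun t => Real.log (vanishing C t).card)

lemma hasDerivAt_meanLog (hC : DoublyTransitive C) (i : Fin n) (q : ℝ) :
    HasDerivAt (meanLog C) (-(Real.log 2 * n * Ex q (undet C i))) q := by
  refine (hasDerivAt_Ex (fun t => Real.log (vanishing C t).card) q).congr_deriv ?_
  have : ∀ j, Ex q (cubeD j (fun t => Real.log (vanishing C t).card))
      = -(Real.log 2 * Ex q (undet C i)) := by
    intro j
    rw [← Ex_undet_eq C hC q j i, ← Ex_mul_left, ← Ex_neg]
    congr 1; ext t; exact cubeD_log_card C j t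
  simp only [this, Finset.sum_const, Finset.card_univ, Fintype.card_fin, nsmul_eq_mul]
  ring

lemma antitone_undet (i : Fin n) : AntitoneOn (fun q => Ex q (undet C i)) (Set.Icc 0 1) :=
  antitoneOn_Ex (cubeD_undet_nonpos C i)

lemma meanLog_zero : meanLog C 0 = Real.log 2 * Module.finrank (ZMod 2) C := by
  classical
  have hc : (vanishing C (fun _ => false)).card = 2 ^ Module.finrank (ZMod 2) C := by
    have h := Module.card_eq_pow_finrank (K := ZMod 2) (V := C)
    rw [ZMod.card] at h
    rw [← h, Fintype.card_subtype]
    congr 1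
    ext x; simp [mem_vanishing]
  rw [meanLog, Ex_at_zero, hc]
  push_cast
  rw [Real.log_pow]; ring

lemma meanLog_one : meanLog C 1 = 0 := by
  have hc : vanishing C (fun _ => true) = {0} := by
    ext x
    rw [mem_vanishing, Finset.mem_singleton]
    constructor
    · rintro ⟨_, h⟩; ext l; exact h l rfl
    · rintro rfl; exact ⟨C.zero_mem, fun _ _ => rfl⟩
  rw [meanLog, Ex_at_one, hc]; simp

lemma meanLog_nonneg {q : ℝ} (h0 : 0 ≤ q) (h1 : q ≤ 1) : 0 ≤ meanLog C q :=
  Ex_nonneg h0 h1 fun _ => Real.log_natCast_nonneg _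

/-- Concavity of the expected rank, compared at `0` and `q`. -/
lemma mul_undet_le_rate (hC : DoublyTransitive C) (i : Fin n) {q : ℝ} (h0 : 0 < q) (h1 : q ≤ 1) :
    q * Ex q (undet C i) ≤ codeRate C := by
  obtain ⟨c, hc, hs⟩ := exists_hasDerivAt_eq_slope (meanLog C) _ h0
    (fun x _ => (hasDerivAt_meanLog C hC i x).continuousAt.continuousWithinAt)
    (fun x _ => hasDerivAt_meanLog C hC i x)
  have hn : (0:ℝ) < n := by exact_mod_cast i.pos
  have l2 : 0 < Real.log 2 := Real.log_pos (by norm_num)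
  rw [eq_div_iff (by linarith), meanLog_zero] at hs
  have hm := antitone_undet C i ⟨hc.1.le, hc.2.le.trans h1⟩ ⟨h0.le, h1⟩ hc.2.le
  have hp := meanLog_nonneg C h0.le h1
  rw [codeRate, Fintype.card_fin, le_div_iff₀ hn]
  beta_reduce at hm
  have k1 := mul_le_mul_of_nonneg_left hm (by positivity : 0 ≤ Real.log 2 * n * q)
  refine le_of_mul_le_mul_left ?_ l2
  linarith

/-- Concavity of the expected rank, compared at `q` and `1`. -/
lemma meanLog_le (hC : DoublyTransitive C) (i : Fin n) {q : ℝ} (h0 : 0 ≤ q) (h1 : q < 1) :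
    meanLog C q ≤ Real.log 2 * n * Ex q (undet C i) := by
  obtain ⟨c, hc, hs⟩ := exists_hasDerivAt_eq_slope (meanLog C) _ h1
    (fun x _ => (hasDerivAt_meanLog C hC i x).continuousAt.continuousWithinAt)
    (fun x _ => hasDerivAt_meanLog C hC i x)
  have l2 : 0 < Real.log 2 := Real.log_pos (by norm_num)
  rw [eq_div_iff (by linarith), meanLog_one] at hs
  have hm := antitone_undet C i ⟨h0, h1.le⟩ ⟨h0.trans hc.1.le, hc.2.le⟩ hc.1.le
  beta_reduce at hm
  have hp : 0 ≤ Ex c (undet C i) :=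
    Ex_nonneg (h0.trans hc.1.le) hc.2.le fun _ => undet_nonneg C i _
  have k1 := mul_le_mul_of_nonneg_left hm (by positivity : 0 ≤ Real.log 2 * n)
  have k2 : 0 ≤ q * (Real.log 2 * n * Ex c (undet C i)) := by positivity
  linarith

/-- `m` independent random sets of density `q` all leave `i` undetermined with probability at most
the `m`-th power of the probability for one of them, and their union is no denser than `m q`. -/
lemma undet_amplify (i : Fin n) {q : ℝ} (h0 : 0 ≤ q) (h1 : q ≤ 1) (m : ℕ) (hm : m * q ≤ 1) :
    Ex (m * q) (undet C i) ≤ Ex q (undet C i) ^ m := by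
  have un : ∀ m : ℕ, Ex (1 - (1 - q) ^ m) (undet C i) ≤ Ex q (undet C i) ^ m := by
    intro m
    induction m with
    | zero =>
      have := Ex_mono (le_refl (0:ℝ)) zero_le_one (f := undet C i) (g := fun _ => 1)
        (fun t => by rcases undet_eq C i t with h | h <;> simp [h])
      rw [Ex_const] at this
      simpa using this
    | succ m ih =>
      have hp0 : 0 ≤ 1 - (1 - q) ^ m := by
        linarith [pow_le_one₀ (n := m) (by linarith : 0 ≤ 1 - q) (by linarith)]
      have hp1 : 1 - (1 - q) ^ m ≤ 1 := by
        linarith [pow_nonneg (by linarith : 0 ≤ 1 - q) m]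
      have e : 1 - (1 - q) ^ (m + 1) = 1 - (1 - (1 - (1 - q) ^ m)) * (1 - q) := by ring
      rw [e, Ex_union]
      have : Ex (1 - (1 - q) ^ m) (fun x => Ex q (fun y => undet C i (fun l => x l || y l)))
          ≤ Ex (1 - (1 - q) ^ m) (fun x => Ex q (undet C i) * undet C i x) := by
        refine Ex_mono hp0 hp1 fun x => ?_
        rw [mul_comm, ← Ex_mul_left]
        exact Ex_mono h0 h1 fun y => undet_or C i x y
      refine this.trans ?_
      rw [Ex_mul_left, pow_succ, mul_comm]
      exact mul_le_mul_of_nonneg_right ih (Ex_nonneg h0 h1 fun _ => undet_nonneg C i _)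
  refine le_trans ?_ (un m)
  have hb : 1 - (1 - q) ^ m ≤ m * q := by
    have := one_add_mul_le_pow (a := -q) (by linarith) m
    rw [← sub_eq_add_neg] at this
    linarith
  refine antitone_undet C i ⟨?_, hb.trans hm⟩ ⟨by positivity, hm⟩ hb
  linarith [pow_le_one₀ (n := m) (by linarith : 0 ≤ 1 - q) (by linarith)]

/-- The weight enumerator is dominated by the expected number of codewords vanishing on a random
set, which is a sum of `(1 - e) ^ |x|` over the code. -/
lemma weightEnum_mul_le {e : ℝ} (h1 : e ≤ 1) (w : ℕ) :
    (weightEnum C w : ℝ) * (1 - e) ^ w ≤ Ex e (fun t => ((vanishing C t).card : ℝ)) := by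
  classical
  have hN : ∀ t, ((vanishing C t).card : ℝ) = ∑ x ∈ Finset.univ.filter (fun x => x ∈ C),
      ∏ i, (if t i = true then (if x i = 0 then (1:ℝ) else 0) else 1) := by
    intro t
    have : vanishing C t = (Finset.univ.filter (fun x => x ∈ C)).filter
        (fun x => ∀ l, t l = true → x l = 0) := by
      ext x; simp [mem_vanishing]
    rw [this, Finset.card_filter]
    push_cast
    refine Finset.sum_congr rfl fun x _ => ?_
    split_ifs with h
    · refine (Finset.prod_eq_one fun l _ => ?_).symm
      split_ifs with a b
      · rfl
      · exact absurd (h l a) b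
      · rfl
    · push Not at h
      obtain ⟨l, hl, hx⟩ := h
      refine (Finset.prod_eq_zero (Finset.mem_univ l) ?_).symm
      simp [hl, hx]
  have hZ : Ex e (fun t => ((vanishing C t).card : ℝ))
      = ∑ x ∈ Finset.univ.filter (fun x => x ∈ C), (1 - e) ^ hammingNorm x := by
    simp only [hN]
    rw [Ex_sum]
    refine Finset.sum_congr rfl fun x _ => ?_
    rw [Ex_prod e (fun i b => if b = true then (if x i = 0 then (1:ℝ) else 0) else 1)]
    rw [hammingNorm, ← Finset.prod_const, Finset.prod_filter]
    refine Finset.prod_congr rfl fun i _ => ?_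
    by_cases h : x i = 0 <;> simp [h]
  rw [hZ]
  have hw : weightEnum C w
      = ((Finset.univ.filter (fun x => x ∈ C)).filter (fun x => hammingNorm x = w)).card := by
    rw [weightEnum, Nat.card_eq_fintype_card, Fintype.card_subtype, Finset.filter_filter]
  have hnn : ∀ x : Fin n → ZMod 2, 0 ≤ (1 - e) ^ hammingNorm x :=
    fun x => pow_nonneg (by linarith) _
  refine le_trans (le_of_eq ?_)
    (Finset.sum_le_sum_of_subset_of_nonneg (Finset.filter_subset
      (fun x => hammingNorm x = w) (Finset.univ.filter fun x => x ∈ C)) fun x _ _ => hnn x)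
  rw [hw, ← nsmul_eq_mul, ← Finset.sum_const]
  exact Finset.sum_congr rfl fun x hx => by rw [(Finset.mem_filter.1 hx).2]

lemma log_Ex_card_le {e : ℝ} (h0 : 0 ≤ e) (h1 : e ≤ 1) :
    Real.log (Ex e (fun t => ((vanishing C t).card : ℝ))) ≤ meanLog C (e / 2) := by
  refine log_Ex_le h0 h1 _ (card_vanishing_pos C) (fun j t => ?_) (fun j t => ?_)
  all_goals
    rw [card_vanishing_update]
    have := card_vanishing_pos C (Function.update t j true)
    rcases undet_eq C j t with h | h <;> rw [h] <;> linarith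

/-- At density `q` at most `8 r⁴`, once a bit is undetermined with probability at most `1 / 2`, that
probability decays at an exponential rate proportional to `log n / r²`. -/
lemma undet_deriv_le (hC : DoublyTransitive C) (hn : 2 ≤ n) (i : Fin n) {q r : ℝ} (hr : 0 < r)
    (h0 : 0 < q) (h1 : q ≤ 1 / 2) (hqr : q ≤ 8 * r ^ 4) (hh : Ex q (undet C i) ≤ 1 / 2) :
    ∑ j, Ex q (cubeD j (undet C i))
      ≤ -(Real.log n / (240 * r ^ 2) * Ex q (undet C i)) := by
  have hqle : q ≤ 1 := by linarith
  obtain ⟨l, hl⟩ : ∃ l : Fin n, l ≠ i := by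
    have : Nontrivial (Fin n) := Fin.nontrivial_iff_two_le.2 hn
    exact exists_ne i
  set I := Ex q (fun t => |cubeD l (undet C i) t|) with hIdef
  have hI0 : 0 ≤ I := Ex_nonneg h0.le hqle fun _ => abs_nonneg _
  have hI : ∀ j, Ex q (fun t => |cubeD j (undet C i) t|) = if j = i then 0 else I := by
    intro j
    split_ifs with h
    · rw [h, influence_self]
    · exact influence_eq C hC q h hl
  have hsum : ∑ j, Ex q (fun t => |cubeD j (undet C i) t|) = (n - 1) * I := by
    simp only [hI]
    rw [← Finset.sum_erase_add _ _ (Finset.mem_univ i)]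
    rw [Finset.sum_congr rfl (g := fun _ => I)
      (fun j hj => if_neg (Finset.ne_of_mem_erase hj))]
    have : 1 ≤ n := by omega
    simp [Nat.cast_sub this]
  have hneg : ∑ j, Ex q (cubeD j (undet C i))
      = -∑ j, Ex q (fun t => |cubeD j (undet C i) t|) := by
    rw [← Finset.sum_neg_distrib]
    refine Finset.sum_congr rfl fun j _ => ?_
    rw [← Ex_neg]
    congr 1; ext t
    rw [abs_of_nonpos (cubeD_undet_nonpos C i j t), neg_neg]
  have hsq : q * ((√q)⁻¹) ^ 2 = 1 := by
    rw [inv_pow, Real.sq_sqrt h0.le]; field_simp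
  have hspos : 0 < (√q)⁻¹ := inv_pos.2 (Real.sqrt_pos.2 h0)
  have hn2 : (2:ℝ) ≤ n := by exact_mod_cast hn
  have st := sharp_threshold h0 h1 hspos hsq (by omega : 1 ≤ n) (undet C i) (undet_eq C i)
    (I := I) (fun j => by rw [hI j]; split_ifs <;> simp [hI0])
    (by rw [hsum]; nlinarith)
  have hslow : 1 / (3 * r ^ 2) ≤ (√q)⁻¹ := by
    rw [one_div]
    refine inv_anti₀ (Real.sqrt_pos.2 h0) ?_
    refine Real.sqrt_le_iff.2 ⟨by positivity, ?_⟩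
    nlinarith [pow_pos hr 4]
  have hL : 0 ≤ Real.log n := Real.log_natCast_nonneg n
  have hE : 0 ≤ Ex q (undet C i) := Ex_nonneg h0.le hqle fun _ => undet_nonneg C i _
  rw [hneg]
  have k1 : Ex q (undet C i) * (1 / 2) * Real.log n
      ≤ Ex q (undet C i) * (1 - Ex q (undet C i)) * Real.log n :=
    mul_le_mul_of_nonneg_right (mul_le_mul_of_nonneg_left (by linarith) hE) hL
  have k2 : 1 / (3 * r ^ 2) * (Ex q (undet C i) * (1 / 2) * Real.log n)
      ≤ (√q)⁻¹ * (Ex q (undet C i) * (1 - Ex q (undet C i)) * Real.log n) :=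
    mul_le_mul hslow k1 (by positivity) hspos.le
  have k3 : 1 / (3 * r ^ 2) * (Ex q (undet C i) * (1 / 2) * Real.log n)
      = 40 * (Real.log n / (240 * r ^ 2) * Ex q (undet C i)) := by
    field_simp; ring
  linarith

/-- For a doubly transitive code of rate at most `2 r⁴`, a random set of coordinates of density
`r / 2` leaves a given bit undetermined with probability at most `1 / n`. -/
lemma undet_small (hC : DoublyTransitive C) (hn : 2 ≤ n) (i : Fin n) {r : ℝ} (hr : 0 < r)
    (hr1 : r ≤ 1 / 1000) (hrate : codeRate C ≤ 2 * r ^ 4) :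
    n * Ex (r / 2) (undet C i) ≤ 1 := by
  have hnpos : (0:ℝ) < n := by exact_mod_cast (by omega : 0 < n)
  have hL : 0 ≤ Real.log n := Real.log_natCast_nonneg n
  have hr2 : r ^ 2 ≤ 1 / 1000 * r := by nlinarith
  have hr4 : r ^ 4 ≤ r ^ 2 := by
    have : r ^ 2 ≤ 1 := by nlinarith
    nlinarith [sq_nonneg r]
  have hr4pos : 0 < r ^ 4 := by positivity
  set q₀ := 4 * r ^ 4 with hq₀
  have hq0 : 0 < q₀ := by positivity
  have hq1 : 2 * q₀ ≤ 1 / 2 := by nlinarith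
  set κ := Real.log n / (240 * r ^ 2) with hκ
  have hhalf : ∀ q ∈ Set.Icc q₀ (2 * q₀), Ex q (undet C i) ≤ 1 / 2 := by
    intro q hq
    have a := mul_undet_le_rate C hC i (hq0.trans_le hq.1) (by linarith [hq.2])
    have b : 0 ≤ Ex q (undet C i) :=
      Ex_nonneg (hq0.le.trans hq.1) (by linarith [hq.2]) fun _ => undet_nonneg C i _
    have c := mul_le_mul_of_nonneg_right hq.1 b
    nlinarith
  -- integrate the differential inequality over `[q₀, 2 q₀]`
  have hanti : AntitoneOn (fun q => Ex q (undet C i) * Real.exp (κ * q))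
      (Set.Icc q₀ (2 * q₀)) := by
    have hd : ∀ q, HasDerivAt (fun q => Ex q (undet C i) * Real.exp (κ * q))
        ((∑ j, Ex q (cubeD j (undet C i))) * Real.exp (κ * q)
          + Ex q (undet C i) * (Real.exp (κ * q) * (κ * 1))) q := fun q =>
      (hasDerivAt_Ex (undet C i) q).mul (((hasDerivAt_id q).const_mul κ).exp)
    refine antitoneOn_of_deriv_nonpos (convex_Icc _ _)
      (fun q _ => (hd q).continuousAt.continuousWithinAt)
      (fun q _ => (hd q).differentiableAt.differentiableWithinAt) ?_
    intro q hq
    rw [interior_Icc] at hq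
    rw [(hd q).deriv]
    have := undet_deriv_le C hC hn i hr (hq0.trans hq.1) (by linarith [hq.2])
      (by linarith [hq.2]) (hhalf q ⟨hq.1.le, hq.2.le⟩)
    rw [← hκ] at this
    have := mul_le_mul_of_nonneg_right this (Real.exp_pos (κ * q)).le
    linarith
  have hdec : Ex (2 * q₀) (undet C i) ≤ Real.exp (-(κ * q₀)) := by
    have h := hanti ⟨le_rfl, by linarith⟩ ⟨by linarith, le_rfl⟩ (by linarith : q₀ ≤ 2 * q₀)
    beta_reduce at h
    have h1 := hhalf q₀ ⟨le_rfl, by linarith⟩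
    have e : Real.exp (κ * (2 * q₀)) = Real.exp (κ * q₀) * Real.exp (κ * q₀) := by
      rw [← Real.exp_add]; ring_nf
    rw [e, ← mul_assoc] at h
    have h2 := le_of_mul_le_mul_right h (Real.exp_pos _)
    rw [Real.exp_neg, ← one_div, le_div_iff₀ (Real.exp_pos _)]
    linarith
  have hκq : κ * q₀ = Real.log n * (r ^ 2 / 60) := by
    rw [hκ, hq₀]; field_simp; ring
  obtain ⟨m, hm⟩ : ∃ m, m = ⌈60 / r ^ 2⌉₊ := ⟨_, rfl⟩
  have hm1 : 60 / r ^ 2 ≤ m := hm ▸ Nat.le_ceil _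
  have hm2 : (m:ℝ) ≤ 60 / r ^ 2 + 1 := hm ▸ (Nat.ceil_lt_add_one (by positivity)).le
  have hmq : m * (2 * q₀) ≤ r / 2 := by
    have a := mul_le_mul_of_nonneg_right hm2 (by positivity : 0 ≤ 2 * q₀)
    have b : (60 / r ^ 2 + 1) * (2 * q₀) = 480 * r ^ 2 + 8 * r ^ 4 := by
      rw [hq₀]; field_simp; ring
    linarith
  have amp := undet_amplify C i (by positivity : 0 ≤ 2 * q₀) (by linarith) m (by linarith)
  have mono := antitone_undet C i (⟨by positivity, by linarith⟩ : m * (2 * q₀) ∈ Set.Icc (0:ℝ) 1)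
    (⟨by positivity, by linarith⟩ : r / 2 ∈ Set.Icc (0:ℝ) 1) hmq
  beta_reduce at mono
  have hE : 0 ≤ Ex (2 * q₀) (undet C i) :=
    Ex_nonneg (by positivity) (by linarith) fun _ => undet_nonneg C i _
  have p := pow_le_pow_left₀ hE hdec m
  rw [← Real.exp_nat_mul, hκq] at p
  have hfin : Real.exp (m * -(Real.log n * (r ^ 2 / 60))) ≤ (n:ℝ)⁻¹ := by
    rw [← Real.exp_log (inv_pos.2 hnpos), Real.log_inv]
    refine Real.exp_le_exp.2 ?_
    have : 1 ≤ m * (r ^ 2 / 60) := by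
      rw [div_le_iff₀ (by positivity)] at hm1
      linarith
    have := mul_le_mul_of_nonneg_right this hL
    linarith
  have tot : Ex (r / 2) (undet C i) ≤ (n:ℝ)⁻¹ := mono.trans (amp.trans (p.trans hfin))
  have := mul_le_mul_of_nonneg_left tot hnpos.le
  rwa [mul_inv_cancel₀ hnpos.ne'] at this

/-- The weight bound, with constant `2`, for a single code. -/
lemma weightEnum_le (hC : DoublyTransitive C) (hn : 2 ≤ n) {r : ℝ} (hr : 0 < r)
    (hr1 : r ≤ 1 / 1000) (hrate : codeRate C ≤ 2 * r ^ 4) (w : ℕ) :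
    (weightEnum C w : ℝ) ≤ 2 * (1 - r) ^ (-(2 * Real.log 2 * (w : ℝ))) := by
  have ha : 0 < 1 - r := by linarith
  have l2 : 0 < Real.log 2 := Real.log_pos (by norm_num)
  set θ := (1 - r) ^ (2 * Real.log 2) with hθ
  have hθ0 : 0 < θ := Real.rpow_pos_of_pos ha _
  have hθ1 : θ ≤ 1 - r := by
    have := Real.rpow_le_rpow_of_exponent_ge ha (by linarith)
      (by linarith [Real.log_two_gt_d9] : (1:ℝ) ≤ 2 * Real.log 2)
    rwa [Real.rpow_one] at this
  let i : Fin n := ⟨0, by omega⟩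
  have hsm := undet_small C hC hn i hr hr1 hrate
  have he0 : 0 ≤ 1 - θ := by linarith
  have he1 : 1 - θ ≤ 1 := by linarith
  have b1 := weightEnum_mul_le C he1 w
  rw [sub_sub_cancel] at b1
  have b2 := log_Ex_card_le C he0 he1
  have b3 := meanLog_le C hC i (q := (1 - θ) / 2) (by linarith) (by linarith)
  have b4 := antitone_undet C i (⟨by linarith, by linarith⟩ : r / 2 ∈ Set.Icc (0:ℝ) 1)
    (⟨by linarith, by linarith⟩ : (1 - θ) / 2 ∈ Set.Icc (0:ℝ) 1) (by linarith)
  beta_reduce at b4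
  have b5 : Real.log (Ex (1 - θ) (fun t => ((vanishing C t).card : ℝ))) ≤ Real.log 2 := by
    have c1 := mul_le_mul_of_nonneg_left b4 (by positivity : 0 ≤ Real.log 2 * n)
    have c2 := mul_le_mul_of_nonneg_left hsm l2.le
    linarith
  have b6 := (Real.log_le_log_iff (Ex_pos he0 he1 (card_vanishing_pos C)) (by norm_num)).1 b5
  have e : (1 - r) ^ (-(2 * Real.log 2 * (w : ℝ))) = (θ ^ w)⁻¹ := by
    rw [Real.rpow_neg ha.le, Real.rpow_mul ha.le, Real.rpow_natCast]
  rw [e, ← div_eq_mul_inv, le_div_iff₀ (pow_pos hθ0 w)]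
  exact b1.trans b6

lemma weightEnum_le_two_pow (w : ℕ) : weightEnum C w ≤ 2 ^ n := by
  classical
  rw [weightEnum, Nat.card_eq_fintype_card]
  refine (Fintype.card_subtype_le _).trans (le_of_eq ?_)
  simp [ZMod.card]

end Codes

/-! ### The weight bound for sequences of codes -/

/-- weight distribution bound for doubly transitive codes of small rate. -/
theorem weight_bound_small_rate :
    ∃ R₀ η : ℝ, 0 < R₀ ∧ 0 < η ∧
      ∀ R : ℝ, 0 < R → R ≤ R₀ →
      ∀ n : ℕ → ℕ, StrictMono n → (∀ k, 0 < n k) →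
      ∀ C : (k : ℕ) → Submodule (ZMod 2) (Fin (n k) → ZMod 2),
        (∀ k, DoublyTransitive (C k)) →
        Filter.Tendsto (fun k => codeRate (C k)) Filter.atTop (nhds R) →
        ∃ a K : ℝ, 1 - R ^ η ≤ a ∧ 0 < K ∧ ∀ k, ∀ i ≤ n k,
          (weightEnum (C k) i : ℝ) ≤ K * a ^ (-(2 * Real.log 2 * (i : ℝ))) := by
  refine ⟨1 / 1000 ^ 4, 1 / 4, by norm_num, by norm_num, ?_⟩
  intro R hR hR0 n hmono _ C hC hlim
  set r := R ^ (1 / 4 : ℝ) with hrdef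
  have hr : 0 < r := Real.rpow_pos_of_pos hR _
  have hr4 : r ^ 4 = R := by
    rw [hrdef, ← Real.rpow_natCast, ← Real.rpow_mul hR.le]; norm_num
  have hr1 : r ≤ 1 / 1000 := by
    refine le_of_pow_le_pow_left₀ (n := 4) (by norm_num) (by norm_num) ?_
    rw [hr4]; linarith
  have ev : ∀ᶠ k in Filter.atTop, codeRate (C k) ≤ 2 * r ^ 4 := by
    rw [hr4]
    exact (hlim.eventually (gt_mem_nhds (by linarith : R < 2 * R))).mono fun k hk => hk.le
  obtain ⟨k₀, hk₀⟩ := Filter.eventually_atTop.1 ev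
  have ha : 0 < 1 - r := by linarith
  refine ⟨1 - r, 2 + ∑ k ∈ Finset.range (k₀ + 2), (2:ℝ) ^ n k, le_rfl, by positivity, ?_⟩
  intro k w _
  have hsum : 0 ≤ ∑ k ∈ Finset.range (k₀ + 2), (2:ℝ) ^ n k := by positivity
  have hpow : 1 ≤ (1 - r) ^ (-(2 * Real.log 2 * (w : ℝ))) := by
    refine Real.one_le_rpow_of_pos_of_le_one_of_nonpos ha (by linarith) ?_
    have : 0 ≤ Real.log 2 := Real.log_nonneg (by norm_num)
    have : 0 ≤ 2 * Real.log 2 * (w : ℝ) := by positivity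
    linarith
  rcases lt_or_ge k (k₀ + 2) with hk | hk
  · -- the finitely many small lengths are absorbed into the constant
    have h1 : (weightEnum (C k) w : ℝ) ≤ 2 ^ n k := by
      exact_mod_cast weightEnum_le_two_pow (C k) w
    have h2 : (2:ℝ) ^ n k ≤ ∑ k ∈ Finset.range (k₀ + 2), (2:ℝ) ^ n k :=
      Finset.single_le_sum (f := fun k => (2:ℝ) ^ n k) (fun _ _ => by positivity)
        (Finset.mem_range.2 hk)
    refine (h1.trans (by linarith :
      _ ≤ 2 + ∑ k ∈ Finset.range (k₀ + 2), (2:ℝ) ^ n k)).trans ?_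
    exact le_mul_of_one_le_right (by positivity) hpow
  · have hn2 : 2 ≤ n k := by
      have := hmono.le_apply (x := k)
      omega
    refine (weightEnum_le (C k) (hC k) hn2 hr hr1 (hk₀ k (by omega)) w).trans ?_
    exact mul_le_mul_of_nonneg_right (by linarith) (by linarith)
end
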